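/- arXiv:1805.10633 — 3 statements merged into one kernel-verified Lean document; each statement's English description precedes it below -/
import Mathlib

section
/- Let (X,Y) be a random pair with E[Y²] < ∞ and with continuous marginal cdf F of X, and let (X_1,Y_1), …, (X_n,Y_n) be independent copies of (X,Y). If the degeneracy condition B_n := n^{−1/2} Σ_{i=2}^n |Y_{i,n} − Y_{i−1,n}| → ∞ in probability holds, then the index I_n := (Σ_{i=2}^n (Y_{i,n} − Y_{i−1,n})₊) / (Σ_{i=2}^n |Y_{i,n} − Y_{i−1,n}|) converges in probability to 1/2 as n → ∞. -/
open MeasureTheory ProbabilityTheory Filter Set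

/-- The `i`-th order statistic (indexed `i = 1, …, n`) of the values
`X 1 ω, …, X n ω`. -/
noncomputable def orderStat {Ω : Type*} (X : ℕ → Ω → ℝ) (n i : ℕ) (ω : Ω) : ℝ :=
  (((Finset.Icc 1 n).val.map (fun j => X j ω)).sort (· ≤ ·)).getD (i - 1) 0

open Classical in
/-- The concomitant `Y_{i,n}`: the `Y`-value of the pair whose `X`-value is the
`i`-th order statistic `X_{i:n}` (well defined whenever the `X`-values are distinct,
which happens almost surely when the cdf of `X` is continuous). -/
noncomputable def concomitant {Ω : Type*} (X Y : ℕ → Ω → ℝ) (n i : ℕ) (ω : Ω) : ℝ :=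
  if hj : ∃ j, j ∈ Finset.Icc 1 n ∧ X j ω = orderStat X n i ω then Y hj.choose ω else 0

/-!
Since `x₊ = (x + |x|) / 2` and the increments of `c` telescope, the index of `c` differs from `1/2`
by `(c n - c 1) / (2 S)`, where `S` is the sum of the absolute increments. The two end values are
among `Y 1, …, Y n`; if the `L^p` norms of these are bounded, then Markov's inequality and a union
bound over the `n` variables show that the end values are `O_P(n^(1/p))`, which is negligible
against `S` as soon as `S / n^(1/p) → ∞` in probability. The theorem is the case `p = 2`.
-/

open scoped ENNReal NNReal

section Increments

/-- The sum `∑_{i=2}^n |c_i - c_{i-1}|` of the absolute increments of `c_1, …, c_n`. -/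
noncomputable def absIncrementSum (c : ℕ → ℝ) (n : ℕ) : ℝ :=
  ∑ i ∈ Finset.Icc 2 n, |c i - c (i - 1)|

/-- The index `∑_{i=2}^n (c_i - c_{i-1})₊ / ∑_{i=2}^n |c_i - c_{i-1}|` measuring how far
`c_1, …, c_n` is from being decreasing; it takes the value `0` when all increments vanish. -/
noncomputable def increaseIndex (c : ℕ → ℝ) (n : ℕ) : ℝ :=
  (∑ i ∈ Finset.Icc 2 n, max (c i - c (i - 1)) 0) / absIncrementSum c n

theorem sum_Icc_two_sub_pred {G : Type*} [AddCommGroup G] (c : ℕ → G) {n : ℕ} (hn : 1 ≤ n) :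
    ∑ i ∈ Finset.Icc 2 n, (c i - c (i - 1)) = c n - c 1 := by
  induction n, hn using Nat.le_induction with
  | base => simp
  | succ k hk ih =>
    rw [Finset.sum_Icc_succ_top (by lia), ih, Nat.add_sub_cancel]
    abel

theorem sum_max_increment_zero (c : ℕ → ℝ) {n : ℕ} (hn : 1 ≤ n) :
    ∑ i ∈ Finset.Icc 2 n, max (c i - c (i - 1)) 0 = (c n - c 1 + absIncrementSum c n) / 2 := by
  rw [← sum_Icc_two_sub_pred c hn, absIncrementSum, ← Finset.sum_add_distrib, Finset.sum_div]
  refine Finset.sum_congr rfl fun i _ => ?_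
  refine (sup_eq_half_smul_add_add_abs_sub' ℝ _ _).trans ?_
  rw [add_zero, zero_sub, abs_neg, smul_eq_mul, inv_mul_eq_div]

theorem increaseIndex_sub_half (c : ℕ → ℝ) {n : ℕ} (hc : absIncrementSum c n ≠ 0) :
    increaseIndex c n - 1 / 2 = (c n - c 1) / (2 * absIncrementSum c n) := by
  have hn : 1 ≤ n := by
    rw [Nat.one_le_iff_ne_zero]
    rintro rfl
    simp [absIncrementSum] at hc
  rw [increaseIndex, sum_max_increment_zero c hn]
  field_simp
  ring

end Increments

section InProbability

variable {Ω ι E : Type*} [MeasurableSpace Ω] {P : Measure Ω} {l : Filter ι}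

/-- Boundedness in probability, `Z = O_P(1)`, of a family of functions along a filter. -/
def BoundedInProbability [Norm E] (P : Measure Ω) (Z : ι → Ω → E) (l : Filter ι) : Prop :=
  ∀ δ : ℝ≥0∞, 0 < δ → ∃ M : ℝ≥0, ∀ᶠ i in l, P {ω | M < ‖Z i ω‖} ≤ δ

/-- Divergence to `∞` in probability of a family of real functions along a filter. -/
def TendstoAtTopInProbability (P : Measure Ω) (T : ι → Ω → ℝ) (l : Filter ι) : Prop :=
  ∀ K > 0, Tendsto (fun i => P {ω | T i ω ≤ K}) l (nhds 0)

theorem BoundedInProbability.sub [SeminormedAddCommGroup E] {Z W : ι → Ω → E}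
    (hZ : BoundedInProbability P Z l) (hW : BoundedInProbability P W l) :
    BoundedInProbability P (fun i ω => Z i ω - W i ω) l := by
  intro δ hδ
  obtain ⟨M, hM⟩ := hZ (δ / 2) (ENNReal.half_pos hδ.ne')
  obtain ⟨N, hN⟩ := hW (δ / 2) (ENNReal.half_pos hδ.ne')
  refine ⟨M + N, ?_⟩
  filter_upwards [hM, hN] with i hi hi'
  have hsub : {ω | ↑(M + N) < ‖Z i ω - W i ω‖} ⊆ {ω | M < ‖Z i ω‖} ∪ {ω | N < ‖W i ω‖} := by
    intro ω (hω : ↑(M + N) < ‖Z i ω - W i ω‖)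
    by_contra! h
    simp only [mem_union, mem_ofPred_eq, not_or, not_lt] at h
    push_cast at hω
    linarith [norm_sub_le (Z i ω) (W i ω)]
  calc P {ω | ↑(M + N) < ‖Z i ω - W i ω‖}
      ≤ P {ω | M < ‖Z i ω‖} + P {ω | N < ‖W i ω‖} :=
        (measure_mono hsub).trans (measure_union_le _ _)
    _ ≤ δ := (add_le_add hi hi').trans_eq (ENNReal.add_halves δ)

theorem BoundedInProbability.tendstoInMeasure_div {V T : ι → Ω → ℝ}
    (hV : BoundedInProbability P V l) (hT : TendstoAtTopInProbability P T l) :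
    TendstoInMeasure P (fun i ω => V i ω / T i ω) l 0 := by
  rw [tendstoInMeasure_iff_norm]
  intro ε hε
  rw [ENNReal.tendsto_nhds_zero]
  intro δ hδ
  obtain ⟨M, hM⟩ := hV (δ / 2) (ENNReal.half_pos hδ.ne')
  have hK : 0 < (M + 1) / ε := by positivity
  filter_upwards [hM, ENNReal.tendsto_nhds_zero.1 (hT _ hK) (δ / 2) (ENNReal.half_pos hδ.ne')]
    with i hVi hTi
  have hsub : {ω | ε ≤ ‖V i ω / T i ω - (0 : Ω → ℝ) ω‖} ⊆
      {ω | M < ‖V i ω‖} ∪ {ω | T i ω ≤ (M + 1) / ε} := by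
    intro ω (hω : ε ≤ ‖V i ω / T i ω - 0‖)
    by_contra! h
    simp only [mem_union, mem_ofPred_eq, not_or, not_lt, not_le] at h
    obtain ⟨hVω, hTω⟩ := h
    have hpos : 0 < T i ω := hK.trans hTω
    rw [sub_zero, norm_div, Real.norm_of_nonneg hpos.le, le_div_iff₀ hpos] at hω
    rw [div_lt_iff₀' hε] at hTω
    linarith
  calc P {ω | ε ≤ ‖V i ω / T i ω - (0 : Ω → ℝ) ω‖}
      ≤ P {ω | M < ‖V i ω‖} + P {ω | T i ω ≤ (M + 1) / ε} :=
        (measure_mono hsub).trans (measure_union_le _ _)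
    _ ≤ δ := (add_le_add hVi hTi).trans_eq (ENNReal.add_halves δ)

theorem TendstoAtTopInProbability.tendstoInMeasure_of_edist_le {F : Type*} [EDist E] [EDist F]
    {T : ι → Ω → ℝ} {f : ι → Ω → E} {f' : Ω → E} {g : ι → Ω → F} {g' : Ω → F}
    (hT : TendstoAtTopInProbability P T l)
    (hfg : ∀ᶠ i in l, ∀ ω, 0 < T i ω → edist (f i ω) (f' ω) ≤ edist (g i ω) (g' ω))
    (hg : TendstoInMeasure P g l g') : TendstoInMeasure P f l f' := by
  intro ε hε
  have hlim := (hT 1 one_pos).add (hg ε hε)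
  rw [add_zero] at hlim
  refine tendsto_of_tendsto_of_tendsto_of_le_of_le' tendsto_const_nhds hlim
    (Eventually.of_forall fun _ => zero_le) ?_
  filter_upwards [hfg] with i hi
  refine (measure_mono fun ω hω => ?_).trans (measure_union_le _ _)
  rcases le_or_gt (T i ω) 1 with hTω | hTω
  · exact Or.inl hTω
  · exact Or.inr (le_trans hω (hi ω (one_pos.trans hTω)))

theorem tendsto_measure_lt_abs_sub_of_tendstoInMeasure {f : ι → Ω → ℝ} {g : Ω → ℝ}
    (h : TendstoInMeasure P f l g) {ε : ℝ} (hε : 0 < ε) :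
    Tendsto (fun i => P {ω | ε < |f i ω - g ω|}) l (nhds 0) :=
  tendsto_of_tendsto_of_tendsto_of_le_of_le tendsto_const_nhds
    (tendstoInMeasure_iff_norm.1 h ε hε) (fun _ => zero_le)
    (fun _ => measure_mono fun _ (hω : ε < |_|) => hω.le)

theorem tendstoInMeasure_increaseIndex {Z : ℕ → ℕ → Ω → ℝ} {a : ℕ → ℝ}
    (hends : BoundedInProbability P (fun n ω => (Z n n ω - Z n 1 ω) / a n) atTop)
    (hdeg : TendstoAtTopInProbability P
      (fun n ω => absIncrementSum (fun i => Z n i ω) n / a n) atTop) :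
    TendstoInMeasure P (fun n ω => increaseIndex (fun i => Z n i ω) n) atTop
      (fun _ => 1 / 2) := by
  refine hdeg.tendstoInMeasure_of_edist_le (Eventually.of_forall fun n ω hpos => ?_)
    (hends.tendstoInMeasure_div hdeg)
  obtain ⟨hS, ha⟩ := div_ne_zero_iff.1 hpos.ne'
  rw [edist_eq_enorm_sub, edist_eq_enorm_sub, increaseIndex_sub_half _ hS,
    div_div_div_cancel_right₀ ha, Pi.zero_apply, sub_zero, mul_comm, ← div_div,
    enorm_le_iff_norm_le, norm_div, Real.norm_two]
  exact half_le_self (norm_nonneg _)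

end InProbability

section Moments

variable {Ω ι κ E : Type*} [MeasurableSpace Ω] {P : Measure Ω} [NormedAddCommGroup E]
  {Y : ι → Ω → E} {p C : ℝ≥0∞}

theorem measure_exists_le_enorm_le (hp0 : p ≠ 0) (hp : p ≠ ∞)
    (hY : ∀ j, AEStronglyMeasurable (Y j) P) (hYC : ∀ j, eLpNorm (Y j) p P ≤ C)
    (s : Finset ι) {t : ℝ≥0∞} (ht0 : t ≠ 0) (ht : t ≠ ∞) :
    P {ω | ∃ j ∈ s, t ≤ ‖Y j ω‖ₑ} ≤ s.card * (C / t) ^ p.toReal := by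
  have markov : ∀ j, P {ω | t ≤ ‖Y j ω‖ₑ} ≤ (C / t) ^ p.toReal := fun j => calc
    P {ω | t ≤ ‖Y j ω‖ₑ} ≤ t⁻¹ ^ p.toReal * eLpNorm (Y j) p P ^ p.toReal :=
      meas_ge_le_mul_pow_eLpNorm_enorm P hp0 hp (hY j) ht0 fun h => absurd h ht
    _ ≤ t⁻¹ ^ p.toReal * C ^ p.toReal := by gcongr; exact hYC j
    _ = (C / t) ^ p.toReal := by
      rw [div_eq_mul_inv, ENNReal.mul_rpow_of_nonneg _ _ ENNReal.toReal_nonneg, mul_comm]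
  calc P {ω | ∃ j ∈ s, t ≤ ‖Y j ω‖ₑ} = P (⋃ j ∈ s, {ω | t ≤ ‖Y j ω‖ₑ}) := by
        congr 1
        ext ω
        simp
    _ ≤ ∑ j ∈ s, P {ω | t ≤ ‖Y j ω‖ₑ} := measure_biUnion_finset_le _ _
    _ ≤ s.card * (C / t) ^ p.toReal := by
        simpa only [nsmul_eq_mul] using s.sum_le_card_nsmul _ _ fun j _ => markov j

theorem measure_exists_mul_card_rpow_le_norm_le (hp0 : p ≠ 0) (hp : p ≠ ∞)
    (hY : ∀ j, AEStronglyMeasurable (Y j) P) (hYC : ∀ j, eLpNorm (Y j) p P ≤ C)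
    (s : Finset ι) {M : ℝ≥0} (hM : M ≠ 0) :
    P {ω | ∃ j ∈ s, M * (s.card : ℝ) ^ p.toReal⁻¹ ≤ ‖Y j ω‖} ≤ (C / M) ^ p.toReal := by
  have hp' : 0 < p.toReal := ENNReal.toReal_pos hp0 hp
  rcases s.eq_empty_or_nonempty with rfl | hs
  · simp
  set r : ℝ≥0 := (s.card : ℝ≥0) ^ p.toReal⁻¹ with hr
  have hr0 : r ≠ 0 := by simp [hr, hs.ne_empty]
  have hrp : (r : ℝ≥0∞) ^ p.toReal = s.card := by
    rw [← ENNReal.coe_rpow_of_nonneg _ hp'.le, hr, NNReal.rpow_inv_rpow hp'.ne',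
      ENNReal.coe_natCast]
  have hset : {ω | ∃ j ∈ s, M * (s.card : ℝ) ^ p.toReal⁻¹ ≤ ‖Y j ω‖} =
      {ω | ∃ j ∈ s, ((M * r : ℝ≥0) : ℝ≥0∞) ≤ ‖Y j ω‖ₑ} := by
    ext ω
    simp only [mem_ofPred_eq, enorm, ENNReal.coe_le_coe, ← NNReal.coe_le_coe, hr]
    simp
  calc P {ω | ∃ j ∈ s, M * (s.card : ℝ) ^ p.toReal⁻¹ ≤ ‖Y j ω‖}
      ≤ s.card * (C / (M * r : ℝ≥0)) ^ p.toReal := by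
        rw [hset]
        exact measure_exists_le_enorm_le hp0 hp hY hYC s (by simp [hM, hr0]) ENNReal.coe_ne_top
    _ = (r * (C / (M * r : ℝ≥0))) ^ p.toReal := by
        rw [ENNReal.mul_rpow_of_nonneg _ _ hp'.le, hrp]
    _ = (C / M) ^ p.toReal := by
        rw [← mul_div_assoc, mul_comm M, ENNReal.coe_mul,
          ENNReal.mul_div_mul_left _ _ (by simpa using hr0) ENNReal.coe_ne_top]

theorem boundedInProbability_div_card_rpow (hp0 : p ≠ 0) (hp : p ≠ ∞)
    (hY : ∀ j, AEStronglyMeasurable (Y j) P) (hC : C ≠ ∞) (hYC : ∀ j, eLpNorm (Y j) p P ≤ C)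
    {l : Filter κ} {s : κ → Finset ι} {Z : κ → Ω → ℝ}
    (hZ : ∀ᶠ k in l, ∀ ω, ∃ j ∈ s k, |Z k ω| ≤ ‖Y j ω‖) :
    BoundedInProbability P (fun k ω => Z k ω / ((s k).card : ℝ) ^ p.toReal⁻¹) l := by
  intro δ hδ
  have hp' : 0 < p.toReal := ENNReal.toReal_pos hp0 hp
  have hδp : δ ^ p.toReal⁻¹ ≠ 0 := by simp [hδ.ne', hp'.le]
  obtain ⟨M, hM⟩ := ENNReal.lt_iff_exists_nnreal_btwn.1 (ENNReal.div_lt_top hC hδp)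
  have hM0 : M ≠ 0 := by
    rintro rfl
    simp at hM
  have hCM : (C / M) ^ p.toReal ≤ δ := by
    rw [← ENNReal.le_rpow_inv_iff hp']
    refine ENNReal.div_le_of_le_mul ?_
    rw [mul_comm, ← ENNReal.div_le_iff_le_mul (.inl hδp) (.inr (by simpa using hM0))]
    exact hM.1.le
  refine ⟨M, ?_⟩
  filter_upwards [hZ] with k hk
  refine (measure_mono fun ω hω => ?_).trans
    ((measure_exists_mul_card_rpow_le_norm_le hp0 hp hY hYC (s k) hM0).trans hCM)
  obtain ⟨j, hj, hZj⟩ := hk ω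
  have hcard : 0 < ((s k).card : ℝ) ^ p.toReal⁻¹ := by
    have := Finset.card_pos.2 ⟨j, hj⟩
    positivity
  refine ⟨j, hj, le_trans ?_ hZj⟩
  rw [mem_ofPred_eq, Real.norm_eq_abs, abs_div, abs_of_pos hcard, lt_div_iff₀ hcard] at hω
  exact hω.le

theorem eLpNorm_eq_eLpNorm_snd_of_measurePreserving {α : Type*} [MeasurableSpace α]
    [MeasurableSpace E] {U : Ω → α} {V : Ω → E} {μ : Measure (α × E)}
    (h : MeasurePreserving (fun ω => (U ω, V ω)) P μ) (hsnd : AEStronglyMeasurable Prod.snd μ) :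
    eLpNorm V p P = eLpNorm Prod.snd p μ := by
  simpa only [Function.comp_def] using eLpNorm_comp_measurePreserving hsnd h

end Moments

section Concomitants

variable {Ω : Type*}

theorem exists_orderStat_eq (X : ℕ → Ω → ℝ) {n i : ℕ} (hi : i ∈ Finset.Icc 1 n) (ω : Ω) :
    ∃ j ∈ Finset.Icc 1 n, X j ω = orderStat X n i ω := by
  obtain ⟨hi1, hin⟩ := Finset.mem_Icc.1 hi
  set values := ((Finset.Icc 1 n).val.map (fun j => X j ω)).sort (· ≤ ·) with hvalues
  have hlt : i - 1 < values.length := by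
    simp only [hvalues, Multiset.length_sort, Multiset.card_map, Finset.card_val, Nat.card_Icc]
    lia
  have hmem : orderStat X n i ω ∈ values := by
    rw [orderStat, List.getD_eq_getElem _ _ hlt]
    exact List.getElem_mem hlt
  simpa [hvalues] using hmem

theorem exists_concomitant_eq (X Y : ℕ → Ω → ℝ) {n i : ℕ} (hi : i ∈ Finset.Icc 1 n) (ω : Ω) :
    ∃ j ∈ Finset.Icc 1 n, concomitant X Y n i ω = Y j ω := by
  have hj := exists_orderStat_eq X hi ω
  exact ⟨hj.choose, hj.choose_spec.1, dif_pos hj⟩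

end Concomitants

/-- `Z n i` abstracts the concomitant `Y_{i,n}`. -/
theorem index_tendsto_half_of_degenerate_general {Ω : Type*} [MeasurableSpace Ω] {P : Measure Ω}
    {Y : ℕ → Ω → ℝ} {Z : ℕ → ℕ → Ω → ℝ} {p C : ℝ≥0∞} (hp0 : p ≠ 0) (hp : p ≠ ∞)
    (hY : ∀ j, AEStronglyMeasurable (Y j) P) (hC : C ≠ ∞) (hYC : ∀ j, eLpNorm (Y j) p P ≤ C)
    (hZ : ∀ n, ∀ i ∈ Finset.Icc 1 n, ∀ ω, ∃ j ∈ Finset.Icc 1 n, Z n i ω = Y j ω)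
    (hdeg : TendstoAtTopInProbability P
      (fun n ω => absIncrementSum (fun i => Z n i ω) n / (n : ℝ) ^ p.toReal⁻¹) atTop) :
    TendstoInMeasure P (fun n ω => increaseIndex (fun i => Z n i ω) n) atTop
      (fun _ => 1 / 2) := by
  have hbounded : ∀ r : ℕ → ℕ, (∀ᶠ n in atTop, r n ∈ Finset.Icc 1 n) →
      BoundedInProbability P (fun n ω => Z n (r n) ω / (n : ℝ) ^ p.toReal⁻¹) atTop := by
    intro r hr
    have hle : ∀ᶠ n in atTop, ∀ ω, ∃ j ∈ Finset.Icc 1 n, |Z n (r n) ω| ≤ ‖Y j ω‖ := by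
      filter_upwards [hr] with n hn ω
      obtain ⟨j, hj, hZj⟩ := hZ n (r n) hn ω
      exact ⟨j, hj, by rw [hZj, Real.norm_eq_abs]⟩
    simpa using boundedInProbability_div_card_rpow hp0 hp hY hC hYC hle
  have hlast := hbounded id <| (eventually_ge_atTop 1).mono fun n hn => by simpa using hn
  have hfirst := hbounded (fun _ => 1) <| (eventually_ge_atTop 1).mono fun n hn => by simpa using hn
  refine tendstoInMeasure_increaseIndex ?_ hdeg
  simpa only [sub_div, id] using hlast.sub hfirst

/-- **Theorem 1.** Let `(X₁,Y₁), (X₂,Y₂), …` be independent copies of a random pair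
`(X,Y)` with `E[Y²] < ∞` and continuous marginal cdf `F` of `X`.  If the degeneracy
condition `Bₙ = n^{−1/2} Σ_{i=2}^n |Y_{i,n} − Y_{i−1,n}| → ∞` in probability holds,
then `Iₙ = Σ (Y_{i,n} − Y_{i−1,n})₊ / Σ |Y_{i,n} − Y_{i−1,n}| → 1/2` in probability. -/
theorem index_tendsto_half_of_degenerate
    {Ω : Type*} [MeasurableSpace Ω] (P : Measure Ω) [IsProbabilityMeasure P]
    (X Y : ℕ → Ω → ℝ) (μ : Measure (ℝ × ℝ)) [IsProbabilityMeasure μ] (F : ℝ → ℝ)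
    -- the pairs `(X i, Y i)` are iid with common law `μ`
    (hmeas : ∀ i, Measurable (fun ω => (X i ω, Y i ω)))
    (hindep : iIndepFun (fun i ω => (X i ω, Y i ω)) P)
    (hlaw : ∀ i, Measure.map (fun ω => (X i ω, Y i ω)) P = μ)
    -- `F` is the (continuous) marginal cdf of `X`
    (hF : ∀ x, F x = (μ {p | p.1 ≤ x}).toReal)
    (hFcont : Continuous F)
    -- `Y` has a finite second moment
    (hY2 : Integrable (fun p : ℝ × ℝ => p.2 ^ 2) μ)
    -- the degeneracy condition: `Bₙ → ∞` in probability
    (hdeg : ∀ K > 0, Tendsto (fun n =>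
      P {ω | (∑ i ∈ Finset.Icc 2 n,
          |concomitant X Y n i ω - concomitant X Y n (i - 1) ω|) / Real.sqrt n ≤ K})
      atTop (nhds 0)) :
    ∀ ε > 0, Tendsto (fun n =>
      P {ω | ε <
        |(∑ i ∈ Finset.Icc 2 n,
            max (concomitant X Y n i ω - concomitant X Y n (i - 1) ω) 0) /
          (∑ i ∈ Finset.Icc 2 n,
            |concomitant X Y n i ω - concomitant X Y n (i - 1) ω|) - 1 / 2|})
      atTop (nhds 0) := by
  have hL2 : MemLp Prod.snd 2 μ :=
    (memLp_two_iff_integrable_sq measurable_snd.aestronglyMeasurable).2 hY2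
  have hlim := index_tendsto_half_of_degenerate_general (P := P) (Y := Y) (Z := concomitant X Y)
    two_ne_zero ENNReal.ofNat_ne_top (fun j => (hmeas j).snd.aestronglyMeasurable) hL2.2.ne
    (fun j => (eLpNorm_eq_eLpNorm_snd_of_measurePreserving ⟨hmeas j, hlaw j⟩ hL2.1).le)
    (fun n i hi ω => exists_concomitant_eq X Y hi ω)
    (by simpa [TendstoAtTopInProbability, absIncrementSum, Real.sqrt_eq_rpow] using hdeg)
  exact fun ε hε => tendsto_measure_lt_abs_sub_of_tendstoInMeasure hlim hε
end

section
/- Let g: [0,1] → ℝ be γ-Hölder continuous with constant c for some γ ≥ 1/2, let t_{i,n} := (i−1)/(n−1), and let ε_1, ε_2, … be i.i.d. non-degenerate random variables with finite second moments. Set Y_{i,n} := g(t_{i,n}) + ε_i for i = 1, …, n. Then B_n := n^{−1/2} Σ_{i=2}^n |Y_{i,n} − Y_{i−1,n}| satisfies B_n ≥ √n · E|ε_2 − ε_1| + O_P(1) as n → ∞; in particular, since E|ε_2 − ε_1| > 0, B_n → ∞ in probability. -/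
/-!
The triangle inequality separates signal from noise: `∑ |Y_{i,n} − Y_{i−1,n}|` is at least
`∑ |ε_i − ε_{i−1}|` minus the variation of `g` along the grid, and the latter is at most
`c (n − 1)^{1 − γ} ≤ c √n` because `γ ≥ 1/2`. The increments `|ε_i − ε_{i−1}|` are identically
distributed and one-dependent, so their sum has variance of order `n`; by Chebyshev it deviates
from its mean by `O_P(√n)`. Dividing by `√n` gives the lower bound. The term
`√n E|ε_2 − ε_1|` diverges because `E|ε_2 − ε_1| = 0` would make `ε_1` independent of itself, hence
almost surely constant.
-/

open MeasureTheory ProbabilityTheory Filter Set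

/-- A sequence of random variables `Z n` is `O_P(1)` (bounded in probability) if for
every `δ > 0` there is `C < ∞` with `limsup_n P(|Z n| > C) ≤ δ`. -/
def IsBoundedInProbability {Ω : Type*} [MeasurableSpace Ω] (P : Measure Ω)
    (Z : ℕ → Ω → ℝ) : Prop :=
  ∀ δ > 0, ∃ C : ℝ, Filter.limsup (fun n => P {ω | C < |Z n ω|}) Filter.atTop
    ≤ ENNReal.ofReal δ

section BoundedInProbability

variable {Ω : Type*} [MeasurableSpace Ω] {P : Measure Ω} {Z : ℕ → Ω → ℝ}

lemma IsBoundedInProbability.sub_const (hZ : IsBoundedInProbability P Z) (a : ℝ) :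
    IsBoundedInProbability P fun n ω ↦ Z n ω - a := by
  intro δ hδ
  obtain ⟨C, hC⟩ := hZ δ hδ
  refine ⟨C + |a|, le_trans (limsup_le_limsup (.of_forall fun n ↦ measure_mono ?_)) hC⟩
  intro ω (hω : C + |a| < |Z n ω - a|)
  have := abs_sub (Z n ω) a
  exact show C < |Z n ω| by linarith

lemma isBoundedInProbability_of_variance_le [IsFiniteMeasure P] {M V : ℝ}
    (hL2 : ∀ᶠ n in atTop, MemLp (Z n) 2 P) (hmean : ∀ᶠ n in atTop, |∫ ω, Z n ω ∂P| ≤ M)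
    (hvar : ∀ᶠ n in atTop, Var[Z n; P] ≤ V) :
    IsBoundedInProbability P Z := by
  intro δ hδ
  have hlim : Tendsto (fun t : ℝ ↦ V / t ^ 2) atTop (nhds 0) :=
    tendsto_const_nhds.div_atTop (tendsto_pow_atTop two_ne_zero)
  obtain ⟨t, hVt, ht⟩ := ((hlim.eventually_le_const hδ).and (eventually_gt_atTop 0)).exists
  refine ⟨M + t, limsup_le_of_le (by isBoundedDefault) ?_⟩
  filter_upwards [hL2, hmean, hvar] with n hZ hM hV
  calc P {ω | M + t < |Z n ω|} ≤ P {ω | t ≤ |Z n ω - ∫ ω', Z n ω' ∂P|} := by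
        refine measure_mono fun ω (hω : M + t < |Z n ω|) ↦ ?_
        have := abs_sub_abs_le_abs_sub (Z n ω) (∫ ω', Z n ω' ∂P)
        exact show t ≤ |Z n ω - ∫ ω', Z n ω' ∂P| by linarith
    _ ≤ ENNReal.ofReal (Var[Z n; P] / t ^ 2) := meas_ge_le_variance_div_sq hZ ht
    _ ≤ ENNReal.ofReal δ := ENNReal.ofReal_le_ofReal (le_trans (by gcongr) hVt)

lemma IsBoundedInProbability.tendsto_measure_le_const {B : ℕ → Ω → ℝ} {a : ℕ → ℝ}
    (hZ : IsBoundedInProbability P Z) (ha : Tendsto a atTop atTop)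
    (hB : ∀ᶠ n in atTop, ∀ ω, a n + Z n ω ≤ B n ω) (K : ℝ) :
    Tendsto (fun n ↦ P {ω | B n ω ≤ K}) atTop (nhds 0) := by
  suffices h : limsup (fun n ↦ P {ω | B n ω ≤ K}) atTop ≤ 0 from
    tendsto_of_le_liminf_of_limsup_le bot_le h
  refine ENNReal.le_of_forall_pos_le_add fun δ hδ _ ↦ ?_
  obtain ⟨C, hC⟩ := hZ δ (by exact_mod_cast hδ)
  rw [zero_add, ← ENNReal.ofReal_coe_nnreal]
  refine le_trans (limsup_le_limsup ?_) hC
  filter_upwards [hB, ha.eventually_gt_atTop (K + C)] with n hBn han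
  refine measure_mono fun ω (hω : B n ω ≤ K) ↦ ?_
  have := neg_abs_le (Z n ω)
  exact show C < |Z n ω| by linarith [hBn ω]

end BoundedInProbability

section Variance

variable {Ω : Type*} [MeasurableSpace Ω] {P : Measure Ω} [IsFiniteMeasure P]

lemma two_mul_covariance_le_variance_add {X Y : Ω → ℝ} (hX : MemLp X 2 P) (hY : MemLp Y 2 P) :
    2 * cov[X, Y; P] ≤ Var[X; P] + Var[Y; P] := by
  have := variance_nonneg (X - Y) P
  rw [variance_sub hX hY] at this
  linarith

lemma variance_sum_le_of_uncorrelated_off {ι : Type*} {s : Finset ι} {X : ι → Ω → ℝ}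
    {N : ι → Finset ι} {d : ℕ} {v : ℝ} (hX : ∀ i ∈ s, MemLp (X i) 2 P)
    (hvar : ∀ i ∈ s, Var[X i; P] ≤ v) (hcard : ∀ i ∈ s, (N i).card ≤ d)
    (hcov : ∀ i ∈ s, ∀ j ∈ s, j ∉ N i → cov[X i, X j; P] = 0) :
    Var[fun ω ↦ ∑ i ∈ s, X i ω; P] ≤ s.card * (d * v) := by
  classical
  rw [variance_fun_sum' hX, ← nsmul_eq_mul]
  refine Finset.sum_le_card_nsmul _ _ _ fun i hi ↦ ?_
  have hv : 0 ≤ v := (variance_nonneg _ _).trans (hvar i hi)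
  calc ∑ j ∈ s, cov[X i, X j; P] = ∑ j ∈ s ∩ N i, cov[X i, X j; P] := by
        refine (Finset.sum_subset Finset.inter_subset_left fun j hj hjN ↦ ?_).symm
        exact hcov i hi j hj fun h ↦ hjN (Finset.mem_inter.2 ⟨hj, h⟩)
    _ ≤ (s ∩ N i).card • v := by
        refine Finset.sum_le_card_nsmul _ _ _ fun j hj ↦ ?_
        have hjs := Finset.mem_of_mem_inter_left hj
        linarith [two_mul_covariance_le_variance_add (hX i hi) (hX j hjs), hvar i hi, hvar j hjs]
    _ ≤ d * v := by
        rw [nsmul_eq_mul]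
        gcongr
        exact (Finset.card_le_card Finset.inter_subset_right).trans (hcard i hi)

end Variance

lemma exists_ae_eq_const_of_indepFun_of_ae_eq {Ω E : Type*} [MeasurableSpace Ω] {P : Measure Ω}
    [IsProbabilityMeasure P] [MeasurableSpace E] [MeasurableSpace.CountablySeparated E]
    [Nonempty E] {X Y : Ω → E} (hX : AEMeasurable X P) (hindep : X ⟂ᵢ[P] Y)
    (hXY : X =ᵐ[P] Y) : ∃ a, ∀ᵐ ω ∂P, X ω = a := by
  have hself : X ⟂ᵢ[P] X := hindep.congr .rfl hXY.symm
  refine exists_eventuallyEq_const_of_forall_separating MeasurableSet fun U hU ↦ ?_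
  rcases measure_eq_zero_or_one_of_indep_self hself ⟨U, hU, rfl⟩ with h0 | h1
  · exact .inr (measure_eq_zero_iff_ae_notMem.1 h0)
  · exact .inl ((mem_ae_iff_prob_eq_one₀ (hX.nullMeasurable hU)).2 h1)

lemma integral_norm_sub_pos_of_indepFun {Ω E : Type*} [MeasurableSpace Ω] {P : Measure Ω}
    [IsProbabilityMeasure P] [NormedAddCommGroup E] [MeasurableSpace E]
    [MeasurableSpace.CountablySeparated E] {X Y : Ω → E} (hX : AEMeasurable X P)
    (hL1 : Integrable (X - Y) P) (hindep : X ⟂ᵢ[P] Y) (hnonconst : ¬ ∃ a, ∀ᵐ ω ∂P, X ω = a) :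
    0 < ∫ ω, ‖X ω - Y ω‖ ∂P := by
  refine (integral_nonneg fun ω ↦ norm_nonneg _).lt_of_ne' fun hzero ↦ hnonconst ?_
  refine exists_ae_eq_const_of_indepFun_of_ae_eq hX hindep ?_
  have hae := (integral_eq_zero_iff_of_nonneg (fun ω ↦ norm_nonneg _) hL1.norm).1 hzero
  filter_upwards [hae] with ω hω using sub_eq_zero.1 (norm_eq_zero.1 hω)

section Increments

variable {Ω : Type*} [MeasurableSpace Ω] {P : Measure Ω} {ε : ℕ → Ω → ℝ}

/-- The absolute increment `|ε_i − ε_{i−1}|` of a sequence of random variables; truncated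
subtraction makes it `0` at `i = 0`. -/
def absIncrement (ε : ℕ → Ω → ℝ) (i : ℕ) (ω : Ω) : ℝ :=
  |ε i ω - ε (i - 1) ω|

/-- The variation `∑_{i=2}^n |ε_i − ε_{i−1}|` of the first `n` terms of a sequence `ε_1, ε_2, …`
of random variables. -/
def noiseVariation (ε : ℕ → Ω → ℝ) (n : ℕ) (ω : Ω) : ℝ :=
  ∑ i ∈ Finset.Icc 2 n, absIncrement ε i ω

lemma memLp_absIncrement {p : ENNReal} (hε : ∀ i, MemLp (ε i) p P) (i : ℕ) :
    MemLp (absIncrement ε i) p P :=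
  ((hε i).sub (hε (i - 1))).abs

lemma identDistrib_absIncrement [IsFiniteMeasure P] (hindep : iIndepFun ε P)
    (hident : ∀ i j, IdentDistrib (ε i) (ε j) P P) {i j : ℕ} (hi : i ≠ 0) (hj : j ≠ 0) :
    IdentDistrib (absIncrement ε i) (absIncrement ε j) P P := by
  have hpair := (hident i j).prodMk (hident (i - 1) (j - 1))
    (hindep.indepFun (by lia)) (hindep.indepFun (by lia))
  exact hpair.comp (u := fun p : ℝ × ℝ ↦ |p.1 - p.2|) (by fun_prop)

lemma indepFun_absIncrement (hmeas : ∀ i, AEMeasurable (ε i) P) (hindep : iIndepFun ε P)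
    {i j : ℕ} (hij : i + 1 < j) :
    absIncrement ε i ⟂ᵢ[P] absIncrement ε j := by
  have hpair := hindep.indepFun_prodMk_prodMk₀ hmeas i (i - 1) j (j - 1)
    (by lia) (by lia) (by lia) (by lia)
  exact hpair.comp (φ := fun p : ℝ × ℝ ↦ |p.1 - p.2|) (ψ := fun p : ℝ × ℝ ↦ |p.1 - p.2|)
    (by fun_prop) (by fun_prop)

lemma covariance_absIncrement_eq_zero (hL2 : ∀ i, MemLp (ε i) 2 P) (hindep : iIndepFun ε P)
    {i j : ℕ} (hij : j ∉ Finset.Icc (i - 1) (i + 1)) :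
    cov[absIncrement ε i, absIncrement ε j; P] = 0 := by
  have hmeas i : AEMeasurable (ε i) P := (hL2 i).aemeasurable
  have hfar : i + 1 < j ∨ j + 1 < i := by
    rw [Finset.mem_Icc] at hij
    lia
  have hindep_ij : absIncrement ε i ⟂ᵢ[P] absIncrement ε j := hfar.elim
    (indepFun_absIncrement hmeas hindep) fun h ↦ (indepFun_absIncrement hmeas hindep h).symm
  exact hindep_ij.covariance_eq_zero (memLp_absIncrement hL2 i) (memLp_absIncrement hL2 j)

lemma memLp_noiseVariation {p : ENNReal} (hε : ∀ i, MemLp (ε i) p P) (n : ℕ) :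
    MemLp (noiseVariation ε n) p P :=
  memLp_finsetSum _ fun i _ ↦ memLp_absIncrement hε i

lemma integral_noiseVariation [IsFiniteMeasure P] (hL1 : ∀ i, Integrable (ε i) P)
    (hindep : iIndepFun ε P) (hident : ∀ i j, IdentDistrib (ε i) (ε j) P P) {n : ℕ} (hn : 1 ≤ n) :
    ∫ ω, noiseVariation ε n ω ∂P = ((n : ℝ) - 1) * ∫ ω, |ε 2 ω - ε 1 ω| ∂P := by
  have hterm : ∀ i ∈ Finset.Icc 2 n,
      ∫ ω, absIncrement ε i ω ∂P = ∫ ω, |ε 2 ω - ε 1 ω| ∂P := fun i hi ↦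
    (identDistrib_absIncrement hindep hident (by grind) two_ne_zero).integral_eq
  have hincr i : Integrable (absIncrement ε i) P := ((hL1 i).sub (hL1 (i - 1))).abs
  have hcard : n + 1 - 2 = n - 1 := by lia
  simp only [noiseVariation]
  rw [integral_finsetSum _ fun i _ ↦ hincr i, Finset.sum_congr rfl hterm, Finset.sum_const,
    Nat.card_Icc, hcard, nsmul_eq_mul, Nat.cast_pred hn]

lemma variance_noiseVariation_le [IsFiniteMeasure P] (hL2 : ∀ i, MemLp (ε i) 2 P)
    (hindep : iIndepFun ε P) (hident : ∀ i j, IdentDistrib (ε i) (ε j) P P) (n : ℕ) :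
    Var[noiseVariation ε n; P] ≤ n * (3 * Var[absIncrement ε 2; P]) := by
  have hvar : ∀ i ∈ Finset.Icc 2 n, Var[absIncrement ε i; P] ≤ Var[absIncrement ε 2; P] :=
    fun i hi ↦ (identDistrib_absIncrement hindep hident (by grind) two_ne_zero).variance_eq.le
  have hcard (i : ℕ) : (Finset.Icc (i - 1) (i + 1)).card ≤ 3 := by
    rw [Nat.card_Icc]
    lia
  calc Var[noiseVariation ε n; P]
      ≤ (Finset.Icc 2 n).card * ((3 : ℕ) * Var[absIncrement ε 2; P]) :=
        variance_sum_le_of_uncorrelated_off (fun i _ ↦ memLp_absIncrement hL2 i) hvar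
          (fun i _ ↦ hcard i) fun i _ j _ ↦ covariance_absIncrement_eq_zero hL2 hindep
    _ ≤ n * (3 * Var[absIncrement ε 2; P]) := by
        have := variance_nonneg (absIncrement ε 2) P
        push_cast
        gcongr
        rw [Nat.card_Icc]
        lia

lemma isBoundedInProbability_noiseVariation [IsProbabilityMeasure P]
    (hL2 : ∀ i, MemLp (ε i) 2 P) (hindep : iIndepFun ε P)
    (hident : ∀ i j, IdentDistrib (ε i) (ε j) P P) :
    IsBoundedInProbability P fun n ω ↦
      noiseVariation ε n ω / √n - √n * ∫ ω', |ε 2 ω' - ε 1 ω'| ∂P := by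
  set m := ∫ ω', |ε 2 ω' - ε 1 ω'| ∂P
  have hm : 0 ≤ m := integral_nonneg fun ω ↦ abs_nonneg _
  have hL1 i : Integrable (ε i) P := (hL2 i).integrable one_le_two
  have hscaled (n : ℕ) : MemLp (fun ω ↦ noiseVariation ε n ω / √n) 2 P := by
    simpa only [div_eq_mul_inv] using (memLp_noiseVariation hL2 n).mul_const (√n)⁻¹
  have hsq (n : ℕ) : √(n : ℝ) ^ 2 = n := Real.sq_sqrt n.cast_nonneg
  refine isBoundedInProbability_of_variance_le (M := m) (V := 3 * Var[absIncrement ε 2; P])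
    (.of_forall fun n ↦ (hscaled n).sub (memLp_const _)) ?mean ?variance
  case mean =>
    filter_upwards [eventually_ge_atTop 1] with n hn
    have hsqrt : 1 ≤ √(n : ℝ) := Real.one_le_sqrt.2 (by exact_mod_cast hn)
    have hmean : ∫ ω, (noiseVariation ε n ω / √n - √n * m) ∂P = -(m / √n) := by
      rw [integral_sub ((hscaled n).integrable one_le_two) (integrable_const _), integral_div,
        integral_noiseVariation hL1 hindep hident hn, integral_const, probReal_univ, one_smul]
      field_simp
      rw [hsq]
      ring
    rw [hmean, abs_neg, abs_of_nonneg (by positivity)]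
    exact div_le_self hm hsqrt
  case variance =>
    filter_upwards [eventually_gt_atTop 0] with n hn
    rw [variance_sub_const (hscaled n).aestronglyMeasurable]
    simp only [div_eq_mul_inv]
    rw [variance_mul_const, inv_pow, hsq, ← div_eq_mul_inv, div_le_iff₀' (Nat.cast_pos.2 hn)]
    exact variance_noiseVariation_le hL2 hindep hident n

end Increments

section HolderSampling

variable {g : ℝ → ℝ} {γ c : ℝ}

lemma sum_abs_sub_grid_le_of_holder
    (hg : ∀ s ∈ Set.Icc (0 : ℝ) 1, ∀ t ∈ Set.Icc (0 : ℝ) 1, |g s - g t| ≤ c * |s - t| ^ γ)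
    {n : ℕ} (hn : 2 ≤ n) :
    ∑ i ∈ Finset.Icc 2 n, |g (((i : ℝ) - 1) / ((n : ℝ) - 1)) - g (((i : ℝ) - 2) / ((n : ℝ) - 1))|
      ≤ c * ((n : ℝ) - 1) ^ (1 - γ) := by
  have hn_two : (2 : ℝ) ≤ n := by exact_mod_cast hn
  have hmesh : 0 < (n : ℝ) - 1 := by linarith
  have hterm : ∀ i ∈ Finset.Icc 2 n,
      |g (((i : ℝ) - 1) / ((n : ℝ) - 1)) - g (((i : ℝ) - 2) / ((n : ℝ) - 1))|
        ≤ c * (1 / ((n : ℝ) - 1)) ^ γ := by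
    intro i hi
    rw [Finset.mem_Icc] at hi
    have hi_two : (2 : ℝ) ≤ i := by exact_mod_cast hi.1
    have hi_le : (i : ℝ) ≤ n := by exact_mod_cast hi.2
    have hstep : ((i : ℝ) - 1) / ((n : ℝ) - 1) - ((i : ℝ) - 2) / ((n : ℝ) - 1)
        = 1 / ((n : ℝ) - 1) := by ring
    have h := hg _ (unitInterval.div_mem (x := (i : ℝ) - 1) (by linarith) hmesh.le (by linarith))
      _ (unitInterval.div_mem (x := (i : ℝ) - 2) (by linarith) hmesh.le (by linarith))
    rwa [hstep, abs_of_pos (one_div_pos.2 hmesh)] at h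
  have hcard : n + 1 - 2 = n - 1 := by lia
  calc _ ≤ (Finset.Icc 2 n).card • (c * (1 / ((n : ℝ) - 1)) ^ γ) :=
        Finset.sum_le_card_nsmul _ _ _ hterm
    _ = c * (((n : ℝ) - 1) * (1 / ((n : ℝ) - 1)) ^ γ) := by
        rw [Nat.card_Icc, hcard, nsmul_eq_mul, Nat.cast_pred (by lia)]
        ring
    _ = c * ((n : ℝ) - 1) ^ (1 - γ) := by
        rw [one_div, Real.inv_rpow hmesh.le, Real.rpow_sub hmesh, Real.rpow_one, div_eq_mul_inv]

lemma rpow_one_sub_le_sqrt {x : ℝ} (hx : 1 ≤ x) (hγ : 1 / 2 ≤ γ) : x ^ (1 - γ) ≤ √x := by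
  rw [Real.sqrt_eq_rpow]
  exact Real.rpow_le_rpow_of_exponent_le hx (by linarith)

/-- The unnormalised statistic `√n · B_n = ∑_{i=2}^n |Y_{i,n} − Y_{i−1,n}|` of the outputs
`Y_{i,n} = g(t_{i,n}) + ε_i`; the grid point `t_{i−1,n}` is written `(i − 2) / (n − 1)` over `ℝ`. -/
noncomputable def outputVariation {Ω : Type*} (g : ℝ → ℝ) (ε : ℕ → Ω → ℝ) (n : ℕ) (ω : Ω) : ℝ :=
  ∑ i ∈ Finset.Icc 2 n,
    |(g (((i : ℝ) - 1) / ((n : ℝ) - 1)) + ε i ω)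
      - (g (((i : ℝ) - 2) / ((n : ℝ) - 1)) + ε (i - 1) ω)|

lemma noiseVariation_le_outputVariation_add {Ω : Type*} (g : ℝ → ℝ) (ε : ℕ → Ω → ℝ) (n : ℕ)
    (ω : Ω) :
    noiseVariation ε n ω ≤ outputVariation g ε n ω + ∑ i ∈ Finset.Icc 2 n,
      |g (((i : ℝ) - 1) / ((n : ℝ) - 1)) - g (((i : ℝ) - 2) / ((n : ℝ) - 1))| := by
  rw [noiseVariation, outputVariation, ← Finset.sum_add_distrib]
  refine Finset.sum_le_sum fun i _ ↦ le_of_eq_of_le ?_ (abs_sub _ _)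
  rw [absIncrement]
  congr 1
  ring

lemma noiseVariation_div_sqrt_sub_le {Ω : Type*} (hγ : 1 / 2 ≤ γ) (hc : 0 ≤ c)
    (hg : ∀ s ∈ Set.Icc (0 : ℝ) 1, ∀ t ∈ Set.Icc (0 : ℝ) 1, |g s - g t| ≤ c * |s - t| ^ γ)
    (ε : ℕ → Ω → ℝ) {n : ℕ} (hn : 2 ≤ n) (ω : Ω) :
    noiseVariation ε n ω / √n - c ≤ outputVariation g ε n ω / √n := by
  have hn_two : (2 : ℝ) ≤ n := by exact_mod_cast hn
  have hsqrt : 0 < √(n : ℝ) := Real.sqrt_pos.2 (by linarith)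
  have hdrift : c * ((n : ℝ) - 1) ^ (1 - γ) ≤ c * √n := by
    gcongr
    exact (rpow_one_sub_le_sqrt (by linarith) hγ).trans (Real.sqrt_le_sqrt (by linarith))
  rw [sub_le_iff_le_add, div_add' _ _ _ hsqrt.ne']
  gcongr
  linarith [noiseVariation_le_outputVariation_add g ε n ω, sum_abs_sub_grid_le_of_holder hg hn]

end HolderSampling

/-- For a `γ`-Hölder `g` (`γ ≥ 1/2`), equidistant points `t_{i,n} = (i−1)/(n−1)`,
and iid non-degenerate errors `ε_i` with finite second moments, the outputs
`Y_{i,n} = g(t_{i,n}) + ε_i` satisfy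
`Bₙ = n^{−1/2} Σ_{i=2}^n |Y_{i,n} − Y_{i−1,n}| ≥ √n · E|ε₂ − ε₁| + O_P(1)`;
in particular, since `E|ε₂ − ε₁| > 0`, `Bₙ → ∞` in probability. -/
theorem noisy_B_tendsto_infty
    {Ω : Type*} [MeasurableSpace Ω] (P : Measure Ω) [IsProbabilityMeasure P]
    (g : ℝ → ℝ) (γ c : ℝ) (hγ : 1 / 2 ≤ γ) (hc : 0 < c)
    (hHolder : ∀ s ∈ Set.Icc (0:ℝ) 1, ∀ t ∈ Set.Icc (0:ℝ) 1,
      |g s - g t| ≤ c * |s - t| ^ γ)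
    (ε : ℕ → Ω → ℝ)
    -- the errors are iid
    (hεmeas : ∀ i, Measurable (ε i))
    (hεindep : iIndepFun (m := fun _ => inferInstance) ε P)
    (hεid : ∀ i, Measure.map (ε i) P = Measure.map (ε 1) P)
    -- they are non-degenerate and have finite second moments
    (hεnondeg : ¬ ∃ a : ℝ, ∀ᵐ ω ∂P, ε 1 ω = a)
    (hε2 : ∀ i, Integrable (fun ω => (ε i ω) ^ 2) P) :
    (∃ R : ℕ → Ω → ℝ, IsBoundedInProbability P R ∧
      ∀ n : ℕ, 2 ≤ n → ∀ ω,
        (∑ i ∈ Finset.Icc (2:ℕ) n,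
            |(g (((i:ℝ) - 1) / ((n:ℝ) - 1)) + ε i ω)
              - (g (((i:ℝ) - 2) / ((n:ℝ) - 1)) + ε (i - 1) ω)|) / Real.sqrt n
          ≥ Real.sqrt n * (∫ ω', |ε 2 ω' - ε 1 ω'| ∂P) + R n ω) ∧
    (∀ K > 0, Tendsto (fun n =>
      P {ω | (∑ i ∈ Finset.Icc (2:ℕ) n,
          |(g (((i:ℝ) - 1) / ((n:ℝ) - 1)) + ε i ω)
            - (g (((i:ℝ) - 2) / ((n:ℝ) - 1)) + ε (i - 1) ω)|) / Real.sqrt n ≤ K})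
      atTop (nhds 0)) := by
  have hL2 i : MemLp (ε i) 2 P :=
    (memLp_two_iff_integrable_sq (hεmeas i).aestronglyMeasurable).2 (hε2 i)
  have hident i j : IdentDistrib (ε i) (ε j) P P :=
    ⟨(hεmeas i).aemeasurable, (hεmeas j).aemeasurable, (hεid i).trans (hεid j).symm⟩
  set m := ∫ ω', |ε 2 ω' - ε 1 ω'| ∂P
  have hm : 0 < m := by
    have hpos := integral_norm_sub_pos_of_indepFun (hεmeas 1).aemeasurable
      (((hL2 1).sub (hL2 2)).integrable one_le_two) (hεindep.indepFun (by decide)) hεnondeg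
    simpa only [m, norm_sub_rev (ε 1 _), Real.norm_eq_abs] using hpos
  have hR : IsBoundedInProbability P fun n ω ↦ noiseVariation ε n ω / √n - √n * m - c :=
    (isBoundedInProbability_noiseVariation hL2 hεindep hident).sub_const c
  have hB (n : ℕ) (hn : 2 ≤ n) (ω : Ω) :
      √n * m + (noiseVariation ε n ω / √n - √n * m - c) ≤ outputVariation g ε n ω / √n := by
    linarith [noiseVariation_div_sqrt_sub_le hγ hc.le hHolder ε hn ω]
  have hdiv : Tendsto (fun n : ℕ ↦ √(n : ℝ) * m) atTop atTop :=
    (Real.tendsto_sqrt_atTop.comp tendsto_natCast_atTop_atTop).atTop_mul_const hm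
  exact ⟨⟨_, hR, hB⟩,
    fun K _ ↦ hR.tendsto_measure_le_const hdiv ((eventually_ge_atTop 2).mono hB) K⟩
end

section
/- Let (X,Y) be a random pair with E[Y²] < ∞ and with continuous marginal cdf F of X, let (X_1,Y_1), …, (X_n,Y_n) be independent copies of (X,Y), and set A_n := n^{−1/2} Σ_{i=2}^n (Y_{i,n} − Y_{i−1,n})₊ and B_n := n^{−1/2} Σ_{i=2}^n |Y_{i,n} − Y_{i−1,n}|. Then A_n − E(A_n | X_1,…,X_n) = O_P(1) and B_n − E(B_n | X_1,…,X_n) = O_P(1) as n → ∞. -/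
open MeasureTheory ProbabilityTheory Filter Set

/-- `Aₙ = n^{−1/2} Σ_{i=2}^n (Y_{i,n} − Y_{i−1,n})₊`. -/
noncomputable def Aseq {Ω : Type*} (X Y : ℕ → Ω → ℝ) (n : ℕ) (ω : Ω) : ℝ :=
  (∑ i ∈ Finset.Icc 2 n,
    max (concomitant X Y n i ω - concomitant X Y n (i - 1) ω) 0) / Real.sqrt n

/-- `Bₙ = n^{−1/2} Σ_{i=2}^n |Y_{i,n} − Y_{i−1,n}|`. -/
noncomputable def Bseq {Ω : Type*} (X Y : ℕ → Ω → ℝ) (n : ℕ) (ω : Ω) : ℝ :=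
  (∑ i ∈ Finset.Icc 2 n,
    |concomitant X Y n i ω - concomitant X Y n (i - 1) ω|) / Real.sqrt n

/-- The σ-field generated by `X 1, …, X n`. -/
noncomputable def sigmaX {Ω : Type*} (X : ℕ → Ω → ℝ) (n : ℕ) : MeasurableSpace Ω :=
  ⨆ i ∈ Finset.Icc 1 n, MeasurableSpace.comap (X i) inferInstance

/-!
By Chebyshev's inequality it suffices to bound the second moment of `S − E(S | X₁,…,Xₙ)` uniformly
in `n`, where `S` is `Aₙ` or `Bₙ`. Given the `X`-values the `Y`-values are independent, so a
conditional Efron–Stein inequality bounds this moment by `∑ₖ E(S − Sₖ)²`, with `Sₖ` obtained from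
`S` by replacing `Yₖ` with `0`. It comes from forgetting `Y₁, …, Yₙ` one at a time: the σ-algebra
`⨆ i, s.piecewise a m i` retains of the pairs with index in `s` only their `X`-values, and the
increments of the resulting reverse martingale are orthogonal. Since `Yₖ` occupies an interval of
positions in the ordered sample, replacing it affects only the differences at the two ends of that
interval, whence `|S − Sₖ| ≤ 2 n^{−1/2} |Yₖ|` and `∑ₖ E(S − Sₖ)² ≤ 4 E[Y²]`.
-/

section ConditionalExpectation

variable {Ω : Type*} {m m₁ m₂ a b mΩ : MeasurableSpace Ω} {μ : Measure Ω}

theorem isPiSystem_image2_inter_measurableSet (m₁ m₂ : MeasurableSpace Ω) :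
    IsPiSystem (image2 (· ∩ ·) {s | MeasurableSet[m₁] s} {t | MeasurableSet[m₂] t}) := by
  rintro _ ⟨s, hs, t, ht, rfl⟩ _ ⟨s', hs', t', ht', rfl⟩ -
  exact ⟨s ∩ s', hs.inter hs', t ∩ t', ht.inter ht', inter_inter_inter_comm s s' t t'⟩

theorem sup_eq_generateFrom_image2_inter (m₁ m₂ : MeasurableSpace Ω) :
    m₁ ⊔ m₂ = MeasurableSpace.generateFrom
      (image2 (· ∩ ·) {s | MeasurableSet[m₁] s} {t | MeasurableSet[m₂] t}) := by
  refine le_antisymm (sup_le (fun s hs ↦ ?_) fun t ht ↦ ?_)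
    (MeasurableSpace.generateFrom_le ?_)
  · exact MeasurableSpace.measurableSet_generateFrom ⟨s, hs, univ, .univ, inter_univ s⟩
  · exact MeasurableSpace.measurableSet_generateFrom ⟨univ, .univ, t, ht, univ_inter t⟩
  · rintro _ ⟨s, hs, t, ht, rfl⟩
    exact .inter (le_sup_left (a := m₁) s hs) (le_sup_right (a := m₁) t ht)

theorem setIntegral_eq_of_forall_inter_eq {E : Type*} [NormedAddCommGroup E] [NormedSpace ℝ E]
    {f g : Ω → E} (hm₁ : m₁ ≤ mΩ) (hm₂ : m₂ ≤ mΩ) (hf : Integrable f μ) (hg : Integrable g μ)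
    (h : ∀ s t, MeasurableSet[m₁] s → MeasurableSet[m₂] t →
      ∫ ω in s ∩ t, f ω ∂μ = ∫ ω in s ∩ t, g ω ∂μ)
    {u : Set Ω} (hu : MeasurableSet[m₁ ⊔ m₂] u) : ∫ ω in u, f ω ∂μ = ∫ ω in u, g ω ∂μ := by
  have hle : m₁ ⊔ m₂ ≤ mΩ := sup_le hm₁ hm₂
  have huniv : ∫ ω, f ω ∂μ = ∫ ω, g ω ∂μ := by simpa using h univ univ .univ .univ
  induction u, hu using MeasurableSpace.induction_on_inter
    (sup_eq_generateFrom_image2_inter m₁ m₂) (isPiSystem_image2_inter_measurableSet m₁ m₂) with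
  | empty => simp
  | basic u hu =>
    obtain ⟨s, hs, t, ht, rfl⟩ := hu
    exact h s t hs ht
  | compl u hu ih =>
    rw [setIntegral_compl (hle u hu) hf, setIntegral_compl (hle u hu) hg, ih, huniv]
  | iUnion u hdisj hu ih =>
    rw [integral_iUnion (fun i ↦ hle _ (hu i)) hdisj hf.integrableOn,
      integral_iUnion (fun i ↦ hle _ (hu i)) hdisj hg.integrableOn]
    exact tsum_congr ih

theorem ae_eq_condExp_sup_of_forall_setIntegral_inter_eq {E : Type*} [NormedAddCommGroup E]
    [NormedSpace ℝ E] [CompleteSpace E] [IsFiniteMeasure μ] {f g : Ω → E} (hm₁ : m₁ ≤ mΩ)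
    (hm₂ : m₂ ≤ mΩ) (hf : Integrable f μ) (hg : Integrable g μ)
    (h : ∀ s t, MeasurableSet[m₁] s → MeasurableSet[m₂] t →
      ∫ ω in s ∩ t, g ω ∂μ = ∫ ω in s ∩ t, f ω ∂μ)
    (hgm : StronglyMeasurable[m₁ ⊔ m₂] g) : g =ᵐ[μ] μ[f | m₁ ⊔ m₂] :=
  ae_eq_condExp_of_forall_setIntegral_eq (sup_le hm₁ hm₂) hf (fun _ _ _ ↦ hg.integrableOn)
    (fun _ hu _ ↦ setIntegral_eq_of_forall_inter_eq hm₁ hm₂ hg hf h hu) hgm.aestronglyMeasurable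

theorem setIntegral_eq_measureReal_smul_integral_of_indep {E : Type*} [NormedAddCommGroup E]
    [NormedSpace ℝ E] [CompleteSpace E] [IsFiniteMeasure μ] {f : Ω → E} (hm₁ : m₁ ≤ mΩ)
    (hm₂ : m₂ ≤ mΩ) (hind : Indep m₁ m₂ μ) (hfm : StronglyMeasurable[m₁] f)
    (hf : Integrable f μ) {s : Set Ω} (hs : MeasurableSet[m₂] s) :
    ∫ ω in s, f ω ∂μ = μ.real s • ∫ ω, f ω ∂μ := by
  rw [← setIntegral_condExp hm₂ hf hs,
    setIntegral_congr_ae (hm₂ s hs) ((condExp_indep_eq hm₁ hm₂ hfm hind).mono fun _ h _ ↦ h),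
    setIntegral_const]

theorem condExp_sup_ae_eq_of_indep {E : Type*} [NormedAddCommGroup E] [NormedSpace ℝ E]
    [CompleteSpace E] [IsFiniteMeasure μ] {f : Ω → E} (ha : a ≤ m₁) (hm₁ : m₁ ≤ mΩ)
    (hm₂ : m₂ ≤ mΩ) (hind : Indep m₁ m₂ μ) (hfm : StronglyMeasurable[m₁] f)
    (hf : Integrable f μ) : μ[f | a ⊔ m₂] =ᵐ[μ] μ[f | a] := by
  have split_inter {g : Ω → E} (hgm : StronglyMeasurable[m₁] g) (hg : Integrable g μ) {s t : Set Ω}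
      (hs : MeasurableSet[a] s) (ht : MeasurableSet[m₂] t) :
      ∫ ω in s ∩ t, g ω ∂μ = μ.real t • ∫ ω in s, g ω ∂μ := by
    have hs' : MeasurableSet s := hm₁ s (ha s hs)
    rw [inter_comm, ← setIntegral_indicator hs', ← integral_indicator hs']
    exact setIntegral_eq_measureReal_smul_integral_of_indep hm₁ hm₂ hind
      (hgm.indicator (ha s hs)) (hg.indicator hs') ht
  refine (ae_eq_condExp_sup_of_forall_setIntegral_inter_eq (ha.trans hm₁) hm₂ hf
    integrable_condExp (fun s t hs ht ↦ ?_) (stronglyMeasurable_condExp.mono le_sup_left)).symm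
  rw [split_inter (stronglyMeasurable_condExp.mono ha) integrable_condExp hs ht,
    split_inter hfm hf hs ht, setIntegral_condExp (ha.trans hm₁) hf hs]

theorem integral_mul_condExp_of_stronglyMeasurable (hm : m ≤ mΩ) [SigmaFinite (μ.trim hm)]
    {f g : Ω → ℝ} (hf : StronglyMeasurable[m] f) (hfg : Integrable (f * g) μ)
    (hg : Integrable g μ) : ∫ ω, f ω * (μ[g | m]) ω ∂μ = ∫ ω, f ω * g ω ∂μ := by
  rw [← Pi.mul_def, ← Pi.mul_def,
    ← integral_congr_ae (condExp_mul_of_stronglyMeasurable_left hf hfg hg), integral_condExp hm]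

theorem setIntegral_eq_integral_condExp_indicator_mul_of_indep [IsFiniteMeasure μ] {f : Ω → ℝ}
    (ha : a ≤ m₁) (hm₁ : m₁ ≤ mΩ) (hm₂ : m₂ ≤ mΩ) (hind : Indep m₁ m₂ μ)
    (hfm : StronglyMeasurable[a ⊔ m₂] f) (hf : Integrable f μ) {s : Set Ω}
    (hs : MeasurableSet[m₁] s) :
    ∫ ω in s, f ω ∂μ = ∫ ω, (μ[s.indicator 1 | a]) ω * f ω ∂μ := by
  have hs' : MeasurableSet s := hm₁ s hs
  have hone : Integrable (s.indicator (1 : Ω → ℝ)) μ := (integrable_const 1).indicator hs'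
  have hmul : f * s.indicator (1 : Ω → ℝ) = s.indicator f := by
    ext ω
    by_cases hω : ω ∈ s <;> simp [hω]
  have hcond : μ[s.indicator (1 : Ω → ℝ) | a ⊔ m₂] =ᵐ[μ] μ[s.indicator 1 | a] :=
    condExp_sup_ae_eq_of_indep ha hm₁ hm₂ hind (stronglyMeasurable_one.indicator hs) hone
  calc ∫ ω in s, f ω ∂μ
      = ∫ ω, (f * s.indicator (1 : Ω → ℝ)) ω ∂μ := by rw [hmul, integral_indicator hs']
    _ = ∫ ω, f ω * (μ[s.indicator (1 : Ω → ℝ) | a ⊔ m₂]) ω ∂μ :=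
        (integral_mul_condExp_of_stronglyMeasurable (sup_le (ha.trans hm₁) hm₂) hfm
          (hmul ▸ hf.indicator hs') hone).symm
    _ = ∫ ω, (μ[s.indicator 1 | a]) ω * f ω ∂μ :=
        integral_congr_ae (hcond.mono fun ω h ↦ by simp only [h, mul_comm])

theorem condExp_sup_ae_eq_condExp_sup_of_indep [IsFiniteMeasure μ] {f : Ω → ℝ} (ha : a ≤ m₁)
    (hb : b ≤ m₂) (hm₁ : m₁ ≤ mΩ) (hm₂ : m₂ ≤ mΩ) (hind : Indep m₁ m₂ μ)
    (hfm : StronglyMeasurable[a ⊔ m₂] f) (hf : Integrable f μ) :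
    μ[f | m₁ ⊔ b] =ᵐ[μ] μ[f | a ⊔ b] := by
  have hab : a ⊔ b ≤ mΩ := sup_le (ha.trans hm₁) (hb.trans hm₂)
  refine (ae_eq_condExp_sup_of_forall_setIntegral_inter_eq hm₁ (hb.trans hm₂) hf
    integrable_condExp (fun s t hs ht ↦ ?_)
    (stronglyMeasurable_condExp.mono (sup_le_sup_right ha b))).symm
  have ht' : MeasurableSet[a ⊔ b] t := le_sup_right (a := a) t ht
  set p := μ[s.indicator (1 : Ω → ℝ) | a]
  set F := t.indicator f
  have hF : Integrable F μ := hf.indicator (hab t ht')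
  have hFm : StronglyMeasurable[a ⊔ m₂] F := hfm.indicator (le_sup_right (a := a) t (hb t ht))
  have hpF : Integrable (p * F) μ := by
    refine hF.bdd_mul integrable_condExp.aestronglyMeasurable (c := 1) ?_
    refine ae_bdd_abs_condExp_of_ae_bdd_abs (R := 1) (ae_of_all _ fun ω ↦ ?_)
    by_cases hω : ω ∈ s <;> simp [hω]
  calc ∫ ω in s ∩ t, (μ[f | a ⊔ b]) ω ∂μ
      = ∫ ω in s, (μ[F | a ⊔ b]) ω ∂μ := by
        rw [← setIntegral_indicator (hab t ht')]
        exact setIntegral_congr_ae (hm₁ s hs)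
          ((condExp_indicator hf ht').mono fun ω h _ ↦ h.symm)
    _ = ∫ ω, p ω * (μ[F | a ⊔ b]) ω ∂μ :=
        setIntegral_eq_integral_condExp_indicator_mul_of_indep ha hm₁ hm₂ hind
          (stronglyMeasurable_condExp.mono (sup_le_sup_left hb a)) integrable_condExp hs
    _ = ∫ ω, p ω * F ω ∂μ :=
        integral_mul_condExp_of_stronglyMeasurable hab
          (stronglyMeasurable_condExp.mono le_sup_left) hpF hF
    _ = ∫ ω in s, F ω ∂μ :=
        (setIntegral_eq_integral_condExp_indicator_mul_of_indep ha hm₁ hm₂ hind hFm hF hs).symm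
    _ = ∫ ω in s ∩ t, f ω ∂μ := setIntegral_indicator (hab t ht')

theorem integral_sub_sq_eq_add_of_stronglyMeasurable [IsFiniteMeasure μ] {f g : Ω → ℝ}
    (hm : m ≤ mΩ) (hf : MemLp f 2 μ) (hg : MemLp g 2 μ) (hgm : StronglyMeasurable[m] g) :
    ∫ ω, (f ω - g ω) ^ 2 ∂μ =
      ∫ ω, (f ω - (μ[f | m]) ω) ^ 2 ∂μ + ∫ ω, ((μ[f | m]) ω - g ω) ^ 2 ∂μ := by
  set c := μ[f | m]
  have hc : MemLp c 2 μ := hf.condExp one_le_two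
  have hcf : Integrable (fun ω ↦ (c ω - g ω) * f ω) μ := (hc.sub hg).integrable_mul hf
  have hcc : Integrable (fun ω ↦ (c ω - g ω) * c ω) μ := (hc.sub hg).integrable_mul hc
  have horth : ∫ ω, (c ω - g ω) * (f ω - c ω) ∂μ = 0 := by
    have hproj : ∫ ω, (c ω - g ω) * c ω ∂μ = ∫ ω, (c ω - g ω) * f ω ∂μ :=
      integral_mul_condExp_of_stronglyMeasurable hm (stronglyMeasurable_condExp.sub hgm) hcf
        (hf.integrable one_le_two)
    simp only [mul_sub (c _ - g _)]
    rw [integral_sub hcf hcc, hproj, sub_self]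
  have hfc_sq : Integrable (fun ω ↦ (f ω - c ω) ^ 2) μ := (hf.sub hc).integrable_sq
  have hcg_sq : Integrable (fun ω ↦ (c ω - g ω) ^ 2) μ := (hc.sub hg).integrable_sq
  have hsq_sq : Integrable (fun ω ↦ (f ω - c ω) ^ 2 + (c ω - g ω) ^ 2) μ := hfc_sq.add hcg_sq
  have hcross : Integrable (fun ω ↦ 2 * ((c ω - g ω) * (f ω - c ω))) μ :=
    ((hc.sub hg).integrable_mul (hf.sub hc)).const_mul 2
  calc ∫ ω, (f ω - g ω) ^ 2 ∂μ
      = ∫ ω, ((f ω - c ω) ^ 2 + (c ω - g ω) ^ 2) + 2 * ((c ω - g ω) * (f ω - c ω)) ∂μ := by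
        congr with ω
        ring
    _ = ∫ ω, (f ω - c ω) ^ 2 ∂μ + ∫ ω, (c ω - g ω) ^ 2 ∂μ := by
        rw [integral_add hsq_sq hcross, integral_add hfc_sq hcg_sq,
          integral_const_mul, horth, mul_zero, add_zero]

theorem integral_sub_condExp_sq_le [IsFiniteMeasure μ] {f g : Ω → ℝ} (hm : m ≤ mΩ)
    (hf : MemLp f 2 μ) (hg : MemLp g 2 μ) (hgm : StronglyMeasurable[m] g) :
    ∫ ω, (f ω - (μ[f | m]) ω) ^ 2 ∂μ ≤ ∫ ω, (f ω - g ω) ^ 2 ∂μ := by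
  rw [integral_sub_sq_eq_add_of_stronglyMeasurable hm hf hg hgm]
  exact le_add_of_nonneg_right (integral_nonneg fun ω ↦ sq_nonneg _)

theorem integral_condExp_sq_le [IsFiniteMeasure μ] {f : Ω → ℝ} (hm : m ≤ mΩ)
    (hf : MemLp f 2 μ) : ∫ ω, (μ[f | m]) ω ^ 2 ∂μ ≤ ∫ ω, f ω ^ 2 ∂μ := by
  have h := integral_sub_sq_eq_add_of_stronglyMeasurable hm hf MemLp.zero stronglyMeasurable_zero
  simp only [Pi.zero_apply, sub_zero] at h
  rw [h]
  exact le_add_of_nonneg_left (integral_nonneg fun ω ↦ sq_nonneg _)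

theorem integral_condExp_sub_condExp_sq_le [IsFiniteMeasure μ] {f g : Ω → ℝ} (hm : m ≤ m₁)
    (hm₁ : m₁ ≤ mΩ) (hf : MemLp f 2 μ) (hg : MemLp g 2 μ) (h : μ[g | m₁] =ᵐ[μ] μ[g | m]) :
    ∫ ω, ((μ[f | m₁]) ω - (μ[f | m]) ω) ^ 2 ∂μ ≤ ∫ ω, (f ω - g ω) ^ 2 ∂μ := by
  have hf₁ : Integrable f μ := hf.integrable one_le_two
  have hg₁ : Integrable g μ := hg.integrable one_le_two
  calc ∫ ω, ((μ[f | m₁]) ω - (μ[f | m]) ω) ^ 2 ∂μ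
      = ∫ ω, ((μ[f | m₁]) ω - (μ[μ[f | m₁] | m]) ω) ^ 2 ∂μ :=
        integral_congr_ae ((condExp_condExp_of_le hm hm₁ (f := f)).mono fun ω hω ↦ by
          simp only [hω])
    _ ≤ ∫ ω, ((μ[f | m₁]) ω - (μ[g | m]) ω) ^ 2 ∂μ :=
        integral_sub_condExp_sq_le (hm.trans hm₁) (hf.condExp one_le_two)
          (hg.condExp one_le_two) stronglyMeasurable_condExp
    _ = ∫ ω, (μ[f - g | m₁]) ω ^ 2 ∂μ := by
        refine integral_congr_ae ?_
        filter_upwards [h, condExp_sub hf₁ hg₁ m₁] with ω hgω hsub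
        rw [← hgω, hsub, Pi.sub_apply]
    _ ≤ ∫ ω, (f ω - g ω) ^ 2 ∂μ := integral_condExp_sq_le hm₁ (hf.sub hg)

end ConditionalExpectation

theorem piecewise_insert_le {ι α : Type*} [DecidableEq ι] [Preorder α] {f g : ι → α} {k : ι}
    (hk : f k ≤ g k) (s : Finset ι) : (insert k s).piecewise f g ≤ s.piecewise f g := by
  rw [Finset.piecewise_insert, update_le_self_iff]
  by_cases hks : k ∈ s <;> simp [hks, hk]

section EfronStein

variable {Ω ι : Type*} [DecidableEq ι] {a m : ι → MeasurableSpace Ω} {mΩ : MeasurableSpace Ω}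
  {μ : Measure Ω}

theorem condExp_iSup_piecewise_insert_ae_eq [IsFiniteMeasure μ] (hm : ∀ i, m i ≤ mΩ)
    (ha : ∀ i, a i ≤ m i) (hind : iIndep m μ) {s : Finset ι} {k : ι} (hk : k ∉ s) {f : Ω → ℝ}
    (hfm : StronglyMeasurable[a k ⊔ ⨆ j ≠ k, m j] f) (hf : Integrable f μ) :
    μ[f | ⨆ j, s.piecewise a m j] =ᵐ[μ] μ[f | ⨆ j, (insert k s).piecewise a m j] := by
  have hindep : Indep (m k) (⨆ j ≠ k, m j) μ := by
    simpa using! indep_iSup_of_disjoint hm hind (S := {k}) (T := {k}ᶜ) (by simp)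
  have hcongr : ⨆ j ≠ k, (insert k s).piecewise a m j = ⨆ j ≠ k, s.piecewise a m j :=
    iSup_congr fun j ↦ iSup_congr fun hj ↦ s.piecewise_insert_of_ne a m hj
  rw [iSup_split_single (s.piecewise a m) k, iSup_split_single ((insert k s).piecewise a m) k,
    Finset.piecewise_eq_of_notMem _ _ _ hk, Finset.piecewise_insert_self, hcongr]
  exact condExp_sup_ae_eq_condExp_sup_of_indep (ha k)
    (iSup₂_mono fun j _ ↦ s.piecewise_le_of_le_of_le (fun i ↦ ha i) le_rfl j) (hm k)
    (iSup₂_le fun j _ ↦ hm j) hindep hfm hf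

theorem integral_sub_condExp_iSup_piecewise_sq_le [IsFiniteMeasure μ] (hm : ∀ i, m i ≤ mΩ)
    (ha : ∀ i, a i ≤ m i) (hind : iIndep m μ) {f : Ω → ℝ} {g : ι → Ω → ℝ} (hf : MemLp f 2 μ)
    (hfm : StronglyMeasurable[⨆ i, m i] f) (hg : ∀ i, MemLp (g i) 2 μ)
    (hgm : ∀ i, StronglyMeasurable[a i ⊔ ⨆ j ≠ i, m j] (g i)) (s : Finset ι) :
    ∫ ω, (f ω - (μ[f | ⨆ i, s.piecewise a m i]) ω) ^ 2 ∂μ ≤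
      ∑ i ∈ s, ∫ ω, (f ω - g i ω) ^ 2 ∂μ := by
  have piecewise_le (t : Finset ι) : ⨆ i, t.piecewise a m i ≤ ⨆ i, m i :=
    iSup_mono (t.piecewise_le_of_le_of_le ha le_rfl)
  have hle : ⨆ i, m i ≤ mΩ := iSup_le hm
  induction s using Finset.induction_on with
  | empty =>
    simp [condExp_of_stronglyMeasurable hle hfm (hf.integrable one_le_two)]
  | insert k s hk ih =>
    set 𝒢 := ⨆ i, s.piecewise a m i
    set ℋ := ⨆ i, (insert k s).piecewise a m i
    have h𝒢 : 𝒢 ≤ mΩ := (piecewise_le s).trans hle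
    have hℋ𝒢 : ℋ ≤ 𝒢 := iSup_mono (piecewise_insert_le (ha k) s)
    calc ∫ ω, (f ω - (μ[f | ℋ]) ω) ^ 2 ∂μ
        = ∫ ω, (f ω - (μ[f | 𝒢]) ω) ^ 2 ∂μ + ∫ ω, ((μ[f | 𝒢]) ω - (μ[f | ℋ]) ω) ^ 2 ∂μ :=
          integral_sub_sq_eq_add_of_stronglyMeasurable h𝒢 hf (hf.condExp one_le_two)
            (stronglyMeasurable_condExp.mono hℋ𝒢)
      _ ≤ ∑ i ∈ s, ∫ ω, (f ω - g i ω) ^ 2 ∂μ + ∫ ω, (f ω - g k ω) ^ 2 ∂μ :=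
          add_le_add ih (integral_condExp_sub_condExp_sq_le hℋ𝒢 h𝒢 hf (hg k)
            (condExp_iSup_piecewise_insert_ae_eq hm ha hind hk (hgm k)
              ((hg k).integrable one_le_two)))
      _ = ∑ i ∈ insert k s, ∫ ω, (f ω - g i ω) ^ 2 ∂μ := by
          rw [Finset.sum_insert hk, add_comm]

end EfronStein

theorem integral_sub_condExp_iSup_sq_le_sum {Ω ι : Type*} [Fintype ι]
    {a m : ι → MeasurableSpace Ω} {mΩ : MeasurableSpace Ω} {μ : Measure Ω} [IsFiniteMeasure μ]
    (hm : ∀ i, m i ≤ mΩ) (ha : ∀ i, a i ≤ m i) (hind : iIndep m μ) {f : Ω → ℝ}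
    {g : ι → Ω → ℝ} (hf : MemLp f 2 μ) (hfm : StronglyMeasurable[⨆ i, m i] f)
    (hg : ∀ i, MemLp (g i) 2 μ) (hgm : ∀ i, StronglyMeasurable[a i ⊔ ⨆ j ≠ i, m j] (g i)) :
    ∫ ω, (f ω - (μ[f | ⨆ i, a i]) ω) ^ 2 ∂μ ≤ ∑ i, ∫ ω, (f ω - g i ω) ^ 2 ∂μ := by
  classical
  simpa using integral_sub_condExp_iSup_piecewise_sq_le hm ha hind hf hfm hg hgm Finset.univ

theorem memLp_comp_of_lipschitzWith {Ω E F : Type*} [MeasurableSpace Ω]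
    [NormedAddCommGroup E] [NormedAddCommGroup F] {μ : Measure Ω} [IsFiniteMeasure μ]
    {K : NNReal} {f : Ω → E} {g : E → F} {p : ENNReal}
    (hg : LipschitzWith K g) (hf : MemLp f p μ) : MemLp (g ∘ f) p μ := by
  have h : MemLp ((fun x ↦ g x - g 0) ∘ f) p μ :=
    (hg.sub (.const (g 0))).comp_memLp (sub_self _) hf
  simpa [Function.comp_def, Pi.add_def] using h.add (memLp_const (g 0))

theorem isBoundedInProbability_of_integral_sq_le {Ω : Type*} [MeasurableSpace Ω] {P : Measure Ω}
    [IsFiniteMeasure P] {Z : ℕ → Ω → ℝ} {V : ℝ} (hZ : ∀ n, MemLp (Z n) 2 P)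
    (hV : ∀ n, ∫ ω, Z n ω ^ 2 ∂P ≤ V) : IsBoundedInProbability P Z := by
  intro δ hδ
  have hV0 : 0 ≤ V := (integral_nonneg fun ω ↦ sq_nonneg (Z 0 ω)).trans (hV 0)
  have hc : 0 < V / δ + 1 := by positivity
  refine ⟨√(V / δ + 1), limsup_le_of_le (by isBoundedDefault) (.of_forall fun n ↦ ?_)⟩
  have hsub : {ω | √(V / δ + 1) < |Z n ω|} ⊆ {ω | V / δ + 1 ≤ Z n ω ^ 2} := fun ω hω ↦ by
    simpa using (Real.sqrt_le_left (abs_nonneg _)).1 (le_of_lt hω)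
  have hcheb : (V / δ + 1) * P.real {ω | V / δ + 1 ≤ Z n ω ^ 2} ≤ V :=
    (mul_meas_ge_le_integral_of_nonneg (ae_of_all _ fun ω ↦ sq_nonneg _)
      (hZ n).integrable_sq _).trans (hV n)
  rw [← ofReal_measureReal]
  refine ENNReal.ofReal_le_ofReal ((measureReal_mono hsub).trans ?_)
  refine le_of_mul_le_mul_left (hcheb.trans ?_) hc
  rw [add_mul, div_mul_cancel₀ _ hδ.ne', one_mul]
  exact le_add_of_nonneg_right hδ.le

theorem getElem_le_iff_lt_countP {α : Type*} [LinearOrder α] {l : List α}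
    (hl : l.Pairwise (· ≤ ·)) {i : ℕ} (hi : i < l.length) (t : α) :
    l[i] ≤ t ↔ i < l.countP (· ≤ t) := by
  induction l generalizing i with
  | nil => simp at hi
  | cons x l ih =>
    obtain ⟨hx, hl⟩ := List.pairwise_cons.1 hl
    rcases le_or_gt x t with hxt | hxt
    · cases i with
      | zero => simp [hxt]
      | succ i => simpa [hxt] using ih hl (Nat.lt_of_succ_lt_succ hi)
    · have hgt : ∀ y ∈ x :: l, t < y :=
        List.forall_mem_cons.2 ⟨hxt, fun y hy ↦ hxt.trans_le (hx y hy)⟩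
      have hzero : (x :: l).countP (· ≤ t) = 0 := List.countP_eq_zero.2 (by simpa using! hgt)
      simpa [hzero] using! hgt _ (List.getElem_mem hi)

theorem measurable_of_forall_iff_imp_eq {α β ι : Type*} [MeasurableSpace α] [MeasurableSpace β]
    [Finite ι] {p : ι → α → Prop} (hp : ∀ i, MeasurableSet {x | p i x}) {f : α → β}
    (hf : ∀ x y, (∀ i, p i x ↔ p i y) → f x = f y) : Measurable f := by
  have hq : Measurable fun x i ↦ p i x :=
    measurable_pi_lambda _ fun i ↦ measurableSet_setOfPred.1 (hp i)
  have hfactor : f.FactorsThrough fun x i ↦ p i x := fun x y hxy ↦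
    hf x y fun i ↦ iff_of_eq (congrFun hxy i)
  rcases isEmpty_or_nonempty α with _ | ⟨⟨x⟩⟩
  · exact measurable_of_empty f
  rw [← hfactor.extend_comp (fun _ ↦ f x)]
  exact Measurable.of_discrete.comp hq

theorem sum_Icc_sub_pred {G : Type*} [AddCommGroup G] (u : ℕ → G) {m n : ℕ} (hmn : m ≤ n) :
    ∑ i ∈ Finset.Icc (m + 1) n, (u i - u (i - 1)) = u n - u m := by
  induction n, hmn using Nat.le_induction with
  | base => simp
  | succ n hmn ih =>
    rw [Finset.sum_Icc_succ_top (by lia), ih, Nat.add_sub_cancel]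
    abel

theorem sum_abs_indicator_sub_pred_le_one_of_isUpperSet {U : Set ℕ} (hU : IsUpperSet U)
    (m n : ℕ) :
    ∑ i ∈ Finset.Icc (m + 1) n, |U.indicator (1 : ℕ → ℝ) i - U.indicator 1 (i - 1)| ≤ 1 := by
  rcases lt_or_ge n m with hnm | hmn
  · simp [Finset.Icc_eq_empty_of_lt (hnm.trans m.lt_succ_self)]
  have hmono : Monotone (U.indicator (1 : ℕ → ℝ)) := fun i j hij ↦
    indicator_apply_le' (fun hi ↦ by simp [hU hij hi])
      fun _ ↦ indicator_nonneg (fun _ _ ↦ zero_le_one) j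
  calc ∑ i ∈ Finset.Icc (m + 1) n, |U.indicator (1 : ℕ → ℝ) i - U.indicator 1 (i - 1)|
      = ∑ i ∈ Finset.Icc (m + 1) n, (U.indicator (1 : ℕ → ℝ) i - U.indicator 1 (i - 1)) :=
        Finset.sum_congr rfl fun i _ ↦ abs_of_nonneg (sub_nonneg.2 (hmono (i.sub_le 1)))
    _ = U.indicator 1 n - U.indicator 1 m := sum_Icc_sub_pred _ hmn
    _ ≤ 1 - 0 := sub_le_sub (indicator_le_self' (fun _ _ ↦ zero_le_one) n)
        (indicator_nonneg (fun _ _ ↦ zero_le_one) m)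
    _ = 1 := sub_zero 1

theorem sum_abs_indicator_sub_pred_le_two_of_ordConnected {A : Set ℕ} (hA : A.OrdConnected)
    (m n : ℕ) :
    ∑ i ∈ Finset.Icc (m + 1) n, |A.indicator (1 : ℕ → ℝ) i - A.indicator 1 (i - 1)| ≤ 2 := by
  set U : Set ℕ := ↑(upperClosure A)
  have hU : IsUpperSet U := (upperClosure A).upper
  have hUA : IsUpperSet (U \ A) := fun i j hij ⟨hiU, hiA⟩ ↦ by
    refine ⟨hU hij hiU, fun hjA ↦ hiA ?_⟩
    obtain ⟨k, hkA, hki⟩ := hiU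
    exact hA.out hkA hjA ⟨hki, hij⟩
  have hsplit (i : ℕ) :
      A.indicator (1 : ℕ → ℝ) i = U.indicator 1 i - (U \ A).indicator 1 i := by
    rw [indicator_sdiff (s := A) subset_upperClosure]
    exact (sub_sub_cancel _ _).symm
  calc ∑ i ∈ Finset.Icc (m + 1) n, |A.indicator (1 : ℕ → ℝ) i - A.indicator 1 (i - 1)|
      ≤ ∑ i ∈ Finset.Icc (m + 1) n, (|U.indicator (1 : ℕ → ℝ) i - U.indicator 1 (i - 1)| +
          |(U \ A).indicator (1 : ℕ → ℝ) i - (U \ A).indicator 1 (i - 1)|) :=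
        Finset.sum_le_sum fun i _ ↦ by
          rw [hsplit, hsplit, sub_sub_sub_comm]
          exact abs_sub _ _
    _ ≤ 1 + 1 := by
        rw [Finset.sum_add_distrib]
        exact add_le_add (sum_abs_indicator_sub_pred_le_one_of_isUpperSet hU m n)
          (sum_abs_indicator_sub_pred_le_one_of_isUpperSet hUA m n)
    _ = 2 := one_add_one_eq_two

open Classical in
/-- The index `j` of the pair whose `X`-value is `X_{i:n}`, so that `Y_{i,n} = Y_j`, with junk
value `0` if there is no such pair. The choice is the one made in `concomitant`; in particular, tied
positions `i` all select the same `j`. -/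
noncomputable def concomitantIndex {Ω : Type*} (X : ℕ → Ω → ℝ) (n i : ℕ) (ω : Ω) : ℕ :=
  if hj : ∃ j, j ∈ Finset.Icc 1 n ∧ X j ω = orderStat X n i ω then hj.choose else 0

/-- The normalized sum `n^{−1/2} Σ_{i=2}^n φ(Y_{i,n} − Y_{i−1,n})`, which is `Aₙ` for
`φ = (·)₊` and `Bₙ` for `φ = |·|`. -/
noncomputable def concomitantSum {Ω : Type*} (φ : ℝ → ℝ) (X Y : ℕ → Ω → ℝ) (n : ℕ) (ω : Ω) : ℝ :=
  (∑ i ∈ Finset.Icc 2 n, φ (concomitant X Y n i ω - concomitant X Y n (i - 1) ω)) / √n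

section OrderStatistics

variable {Ω : Type*} {m : MeasurableSpace Ω} {X Y : ℕ → Ω → ℝ} {n i k : ℕ} {ω : Ω}

theorem exists_orderStat_eq_getElem (hi : i ∈ Finset.Icc 1 n) :
    ∃ h : i - 1 < (((Finset.Icc 1 n).val.map fun j ↦ X j ω).sort (· ≤ ·)).length,
      orderStat X n i ω = (((Finset.Icc 1 n).val.map fun j ↦ X j ω).sort (· ≤ ·))[i - 1] := by
  have hin := Finset.mem_Icc.1 hi
  have hlt : i - 1 < (((Finset.Icc 1 n).val.map fun j ↦ X j ω).sort (· ≤ ·)).length := by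
    rw [Multiset.length_sort, Multiset.card_map, Finset.card_val, Nat.card_Icc]
    lia
  exact ⟨hlt, List.getD_eq_getElem _ _ hlt⟩

theorem exists_eq_orderStat (hi : i ∈ Finset.Icc 1 n) :
    ∃ j, j ∈ Finset.Icc 1 n ∧ X j ω = orderStat X n i ω := by
  obtain ⟨hlt, heq⟩ := exists_orderStat_eq_getElem (X := X) (ω := ω) hi
  rw [heq]
  simpa only [Multiset.mem_sort, Multiset.mem_map, Finset.mem_val] using List.getElem_mem hlt

theorem orderStat_le_iff (hi : i ∈ Finset.Icc 1 n) (t : ℝ) :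
    orderStat X n i ω ≤ t ↔ i ≤ ((Finset.Icc 1 n).filter fun j ↦ X j ω ≤ t).card := by
  obtain ⟨hlt, heq⟩ := exists_orderStat_eq_getElem (X := X) (ω := ω) hi
  rw [heq, getElem_le_iff_lt_countP (Multiset.pairwise_sort _ _), ← Multiset.coe_countP,
    Multiset.sort_eq, Multiset.countP_map, Finset.card, Finset.filter_val]
  have := (Finset.mem_Icc.1 hi).1
  lia

theorem monotoneOn_orderStat : MonotoneOn (fun i ↦ orderStat X n i ω) (Finset.Icc 1 n) :=
  fun _ hi _ hj hij ↦ (orderStat_le_iff hi _).2 (hij.trans ((orderStat_le_iff hj _).1 le_rfl))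

theorem measurable_orderStat (hX : ∀ j ∈ Finset.Icc 1 n, Measurable (X j))
    (hi : i ∈ Finset.Icc 1 n) : Measurable (orderStat X n i) := by
  refine measurable_of_Iic fun t ↦ ?_
  simp only [preimage, mem_Iic, orderStat_le_iff hi, Finset.card_filter]
  exact measurableSet_le measurable_const (Finset.measurable_sum _ fun j hj ↦
    Measurable.ite (hX j hj measurableSet_Iic) measurable_const measurable_const)

theorem concomitantIndex_spec (hi : i ∈ Finset.Icc 1 n) :
    concomitantIndex X n i ω ∈ Finset.Icc 1 n ∧
      X (concomitantIndex X n i ω) ω = orderStat X n i ω := by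
  rw [concomitantIndex, dif_pos (exists_eq_orderStat hi)]
  exact (exists_eq_orderStat hi).choose_spec

theorem concomitant_eq (hi : i ∈ Finset.Icc 1 n) :
    concomitant X Y n i ω = Y (concomitantIndex X n i ω) ω := by
  rw [concomitant, concomitantIndex, dif_pos (exists_eq_orderStat hi),
    dif_pos (exists_eq_orderStat hi)]

theorem concomitantIndex_congr {i' : ℕ} {ω' : Ω}
    (h : ∀ j ∈ Finset.Icc 1 n, X j ω = orderStat X n i ω ↔ X j ω' = orderStat X n i' ω') :
    concomitantIndex X n i ω = concomitantIndex X n i' ω' := by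
  have hpred : (fun j ↦ j ∈ Finset.Icc 1 n ∧ X j ω = orderStat X n i ω) =
      fun j ↦ j ∈ Finset.Icc 1 n ∧ X j ω' = orderStat X n i' ω' :=
    funext fun j ↦ propext (and_congr_right (h j))
  classical
  exact congrArg (fun p : ℕ → Prop ↦ if hj : ∃ j, p j then hj.choose else 0) hpred

theorem ordConnected_setOf_concomitantIndex_eq :
    {i | i ∈ Finset.Icc 1 n ∧ concomitantIndex X n i ω = k}.OrdConnected := by
  refine ordConnected_of_Ioo ?_
  rintro i ⟨hi, hik⟩ l ⟨hl, hlk⟩ - j hj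
  have hjn : j ∈ Finset.Icc 1 n := by
    rw [Finset.mem_Icc] at hi hl ⊢
    exact ⟨hi.1.trans hj.1.le, hj.2.le.trans hl.2⟩
  have hil : orderStat X n i ω = orderStat X n l ω := by
    rw [← (concomitantIndex_spec hi).2, ← (concomitantIndex_spec hl).2, hik, hlk]
  have hij : orderStat X n j ω = orderStat X n i ω :=
    le_antisymm ((monotoneOn_orderStat hjn hl hj.2.le).trans hil.ge)
      (monotoneOn_orderStat hi hjn hj.1.le)
  exact ⟨hjn, (concomitantIndex_congr fun _ _ ↦ by rw [hij]).trans hik⟩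

theorem measurable_concomitantIndex (hX : ∀ j ∈ Finset.Icc 1 n, Measurable (X j))
    (hi : i ∈ Finset.Icc 1 n) : Measurable (concomitantIndex X n i) :=
  measurable_of_forall_iff_imp_eq
    (p := fun (j : Finset.Icc 1 n) ω ↦ X j ω = orderStat X n i ω)
    (fun j ↦ measurableSet_eq_fun (hX j j.2) (measurable_orderStat hX hi))
    fun _ _ h ↦ concomitantIndex_congr fun j hj ↦ h ⟨j, hj⟩

theorem concomitant_eq_sum_indicator (hi : i ∈ Finset.Icc 1 n) :
    concomitant X Y n i =
      ∑ j ∈ Finset.Icc 1 n, {ω | concomitantIndex X n i ω = j}.indicator (Y j) := by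
  ext ω
  rw [Finset.sum_apply, concomitant_eq hi]
  simp only [indicator_apply, mem_ofPred_eq]
  rw [Finset.sum_ite_eq, if_pos (concomitantIndex_spec hi).1]

theorem measurable_concomitant (hX : ∀ j ∈ Finset.Icc 1 n, Measurable (X j))
    (hY : ∀ j ∈ Finset.Icc 1 n, Measurable (Y j)) (hi : i ∈ Finset.Icc 1 n) :
    Measurable (concomitant X Y n i) := by
  rw [concomitant_eq_sum_indicator hi, Finset.sum_fn]
  exact Finset.measurable_sum _ fun j hj ↦
    (hY j hj).indicator (measurable_concomitantIndex hX hi (measurableSet_singleton j))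

theorem memLp_concomitant {p : ENNReal} {P : Measure Ω}
    (hX : ∀ j ∈ Finset.Icc 1 n, Measurable (X j)) (hY : ∀ j ∈ Finset.Icc 1 n, MemLp (Y j) p P)
    (hi : i ∈ Finset.Icc 1 n) : MemLp (concomitant X Y n i) p P := by
  rw [concomitant_eq_sum_indicator hi]
  exact memLp_finsetSum' _ fun j hj ↦
    (hY j hj).indicator (measurable_concomitantIndex hX hi (measurableSet_singleton j))

theorem concomitant_sub_concomitant_update (Z : Ω → ℝ) (hi : i ∈ Finset.Icc 1 n) :
    concomitant X Y n i ω - concomitant X (Function.update Y k Z) n i ω =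
      {i | i ∈ Finset.Icc 1 n ∧ concomitantIndex X n i ω = k}.indicator 1 i *
        (Y k ω - Z ω) := by
  rw [concomitant_eq hi, concomitant_eq hi]
  by_cases hk : concomitantIndex X n i ω = k
  · rw [indicator_of_mem (mem_ofPred_eq ▸ ⟨hi, hk⟩), hk, Function.update_self, Pi.one_apply,
      one_mul]
  · rw [indicator_of_notMem fun h ↦ hk h.2, Function.update_of_ne hk, sub_self, zero_mul]

end OrderStatistics

section ConcomitantSum

variable {Ω : Type*} {m : MeasurableSpace Ω} {X Y : ℕ → Ω → ℝ} {φ : ℝ → ℝ} {n : ℕ}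

theorem mem_Icc_one_and_sub_one_mem {i : ℕ} (hi : i ∈ Finset.Icc 2 n) :
    i ∈ Finset.Icc 1 n ∧ i - 1 ∈ Finset.Icc 1 n := by
  simp only [Finset.mem_Icc] at hi ⊢
  lia

theorem measurable_concomitantSum (hφ : Measurable φ)
    (hX : ∀ j ∈ Finset.Icc 1 n, Measurable (X j)) (hY : ∀ j ∈ Finset.Icc 1 n, Measurable (Y j)) :
    Measurable (concomitantSum φ X Y n) := by
  refine (Finset.measurable_sum _ fun i hi ↦ ?_).div_const _
  obtain ⟨hi₁, hi₂⟩ := mem_Icc_one_and_sub_one_mem hi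
  exact hφ.comp ((measurable_concomitant hX hY hi₁).sub (measurable_concomitant hX hY hi₂))

theorem memLp_concomitantSum {p : ENNReal} {P : Measure Ω} [IsFiniteMeasure P] {K : NNReal}
    (hφ : LipschitzWith K φ) (hX : ∀ j ∈ Finset.Icc 1 n, Measurable (X j))
    (hY : ∀ j ∈ Finset.Icc 1 n, MemLp (Y j) p P) : MemLp (concomitantSum φ X Y n) p P := by
  have hsum : MemLp (fun ω ↦ ∑ i ∈ Finset.Icc 2 n,
      φ (concomitant X Y n i ω - concomitant X Y n (i - 1) ω)) p P :=
    memLp_finsetSum (Finset.Icc 2 n) fun i hi ↦ by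
      obtain ⟨hi₁, hi₂⟩ := mem_Icc_one_and_sub_one_mem hi
      exact memLp_comp_of_lipschitzWith hφ
        ((memLp_concomitant hX hY hi₁).sub (memLp_concomitant hX hY hi₂))
  simpa only [concomitantSum, div_eq_mul_inv] using! hsum.mul_const (√n)⁻¹

theorem abs_concomitantSum_sub_update_le {K : NNReal} (hφ : LipschitzWith K φ) (k : ℕ)
    (Z : Ω → ℝ) (ω : Ω) :
    |concomitantSum φ X Y n ω - concomitantSum φ X (Function.update Y k Z) n ω| ≤
      2 * K * |Y k ω - Z ω| / √n := by
  set Y' := Function.update Y k Z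
  set A := {i | i ∈ Finset.Icc 1 n ∧ concomitantIndex X n i ω = k}
  let Δ (W : ℕ → Ω → ℝ) (i : ℕ) : ℝ := concomitant X W n i ω - concomitant X W n (i - 1) ω
  have hterm (i : ℕ) (hi : i ∈ Finset.Icc 2 n) : |φ (Δ Y i) - φ (Δ Y' i)| ≤
      K * |Y k ω - Z ω| * |A.indicator (1 : ℕ → ℝ) i - A.indicator 1 (i - 1)| := by
    obtain ⟨hi₁, hi₂⟩ := mem_Icc_one_and_sub_one_mem hi
    refine (hφ.dist_le_mul (Δ Y i) (Δ Y' i)).trans_eq ?_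
    rw [Real.dist_eq, sub_sub_sub_comm, concomitant_sub_concomitant_update Z hi₁,
      concomitant_sub_concomitant_update Z hi₂, ← sub_mul, abs_mul, mul_assoc,
      mul_comm |Y k ω - Z ω|]
  rw [concomitantSum, concomitantSum, ← sub_div, ← Finset.sum_sub_distrib, abs_div,
    abs_of_nonneg (Real.sqrt_nonneg _)]
  gcongr
  calc |∑ i ∈ Finset.Icc 2 n, (φ (Δ Y i) - φ (Δ Y' i))|
      ≤ ∑ i ∈ Finset.Icc 2 n, |φ (Δ Y i) - φ (Δ Y' i)| := Finset.abs_sum_le_sum_abs _ _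
    _ ≤ K * |Y k ω - Z ω| *
          ∑ i ∈ Finset.Icc 2 n, |A.indicator (1 : ℕ → ℝ) i - A.indicator 1 (i - 1)| := by
        rw [Finset.mul_sum]
        exact Finset.sum_le_sum hterm
    _ ≤ K * |Y k ω - Z ω| * 2 := by
        gcongr
        exact sum_abs_indicator_sub_pred_le_two_of_ordConnected
          ordConnected_setOf_concomitantIndex_eq 1 n
    _ = 2 * K * |Y k ω - Z ω| := by ring

end ConcomitantSum

section IndependentPairs

variable {Ω : Type*} [MeasurableSpace Ω] {P : Measure Ω} {X Y : ℕ → Ω → ℝ} {φ : ℝ → ℝ}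
  {K : NNReal} {V : ℝ}

theorem integral_concomitantSum_sub_update_sq_le {n k : ℕ} (hφ : LipschitzWith K φ)
    (hY2 : MemLp (Y k) 2 P) (hV : ∫ ω, Y k ω ^ 2 ∂P ≤ V) :
    ∫ ω, (concomitantSum φ X Y n ω - concomitantSum φ X (Function.update Y k 0) n ω) ^ 2 ∂P ≤
      (2 * K) ^ 2 * V / n := by
  have hsq (ω : Ω) :
      (concomitantSum φ X Y n ω - concomitantSum φ X (Function.update Y k 0) n ω) ^ 2 ≤
        (2 * K) ^ 2 / n * Y k ω ^ 2 := by
    rw [← sq_abs]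
    refine (pow_le_pow_left₀ (abs_nonneg _)
      (abs_concomitantSum_sub_update_le hφ k 0 ω) 2).trans_eq ?_
    rw [Pi.zero_apply, sub_zero, div_pow, mul_pow, sq_abs, Real.sq_sqrt n.cast_nonneg]
    ring
  calc _ ≤ ∫ ω, (2 * K) ^ 2 / n * Y k ω ^ 2 ∂P :=
        integral_mono_of_nonneg (ae_of_all _ fun ω ↦ sq_nonneg _)
          (hY2.integrable_sq.const_mul _) (ae_of_all _ hsq)
    _ = (2 * K) ^ 2 / n * ∫ ω, Y k ω ^ 2 ∂P := integral_const_mul _ _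
    _ ≤ (2 * K) ^ 2 / n * V := by gcongr
    _ = (2 * K) ^ 2 * V / n := by ring

theorem integral_concomitantSum_sub_condExp_sq_le_sum [IsProbabilityMeasure P] (n : ℕ)
    (hφ : LipschitzWith K φ)
    (hmeas : ∀ i, Measurable fun ω ↦ (X i ω, Y i ω))
    (hindep : iIndepFun (fun i ω ↦ (X i ω, Y i ω)) P) (hY2 : ∀ i, MemLp (Y i) 2 P) :
    ∫ ω, (concomitantSum φ X Y n ω - (P[concomitantSum φ X Y n | sigmaX X n]) ω) ^ 2 ∂P ≤
      ∑ k : Finset.Icc 1 n, ∫ ω, (concomitantSum φ X Y n ω -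
        concomitantSum φ X (Function.update Y k 0) n ω) ^ 2 ∂P := by
  let a (j : Finset.Icc 1 n) : MeasurableSpace Ω := .comap (X j) inferInstance
  let m (j : Finset.Icc 1 n) : MeasurableSpace Ω := .comap (fun ω ↦ (X j ω, Y j ω)) inferInstance
  have hX (j : ℕ) : Measurable (X j) := measurable_fst.comp (hmeas j)
  have hXm (j) : Measurable[m j] (X j) := measurable_fst.comp (comap_measurable _)
  have hYm (j) : Measurable[m j] (Y j) := measurable_snd.comp (comap_measurable _)
  have hm_le (j) : m j ≤ ⨆ i, m i := le_iSup m j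
  have hrest {k j : Finset.Icc 1 n} (hjk : j ≠ k) : m j ≤ a k ⊔ ⨆ i ≠ k, m i :=
    le_sup_of_le_right (le_iSup₂_of_le (f := fun i _ ↦ m i) j hjk le_rfl)
  have hsigma : sigmaX X n = ⨆ j, a j := iSup_subtype'
  have hYupd (k : ℕ) : ∀ j, MemLp (Function.update Y k 0 j) 2 P :=
    (Function.forall_update_iff Y fun _ y ↦ MemLp y 2 P).2 ⟨.zero, fun j _ ↦ hY2 j⟩
  rw [hsigma]
  refine integral_sub_condExp_iSup_sq_le_sum (m := m) (fun j ↦ (hmeas j).comap_le)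
    (fun j ↦ (hXm j).comap_le) (hindep.iIndep.precomp Subtype.val_injective)
    (memLp_concomitantSum hφ (fun j _ ↦ hX j) fun j _ ↦ hY2 j) ?_
    (fun k ↦ memLp_concomitantSum hφ (fun j _ ↦ hX j) fun j _ ↦ hYupd k j) fun k ↦ ?_
  · exact (measurable_concomitantSum hφ.continuous.measurable
      (fun j hj ↦ (hXm ⟨j, hj⟩).mono (hm_le ⟨j, hj⟩) le_rfl)
      fun j hj ↦ (hYm ⟨j, hj⟩).mono (hm_le ⟨j, hj⟩) le_rfl).stronglyMeasurable
  · refine (measurable_concomitantSum hφ.continuous.measurable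
      (fun j hj ↦ ?_) fun j hj ↦ ?_).stronglyMeasurable
    · rcases eq_or_ne ⟨j, hj⟩ k with rfl | hjk
      · exact (comap_measurable _).mono le_sup_left le_rfl
      · exact (hXm ⟨j, hj⟩).mono (hrest hjk) le_rfl
    · rcases eq_or_ne ⟨j, hj⟩ k with rfl | hjk
      · rw [Function.update_self]
        exact measurable_const
      · rw [Function.update_of_ne (by simpa [Subtype.ext_iff] using hjk)]
        exact (hYm ⟨j, hj⟩).mono (hrest hjk) le_rfl

theorem integral_concomitantSum_sub_condExp_sq_le [IsProbabilityMeasure P] (n : ℕ)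
    (hφ : LipschitzWith K φ)
    (hmeas : ∀ i, Measurable fun ω ↦ (X i ω, Y i ω))
    (hindep : iIndepFun (fun i ω ↦ (X i ω, Y i ω)) P) (hY2 : ∀ i, MemLp (Y i) 2 P)
    (hV : ∀ i, ∫ ω, Y i ω ^ 2 ∂P ≤ V) :
    ∫ ω, (concomitantSum φ X Y n ω - (P[concomitantSum φ X Y n | sigmaX X n]) ω) ^ 2 ∂P ≤
      (2 * K) ^ 2 * V := by
  have hV0 : 0 ≤ V := (integral_nonneg fun ω ↦ sq_nonneg (Y 0 ω)).trans (hV 0)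
  calc _ ≤ ∑ k : Finset.Icc 1 n, (2 * K) ^ 2 * V / n :=
        (integral_concomitantSum_sub_condExp_sq_le_sum n hφ hmeas hindep hY2).trans
          (Finset.sum_le_sum fun k _ ↦ integral_concomitantSum_sub_update_sq_le hφ (hY2 k) (hV k))
    _ = (2 * K) ^ 2 * V * (n / n) := by
        rw [Finset.sum_const, Finset.card_univ, Fintype.card_coe, Nat.card_Icc,
          Nat.add_sub_cancel, nsmul_eq_mul, mul_div_left_comm]
    _ ≤ (2 * K) ^ 2 * V := mul_le_of_le_one_right (by positivity) (div_self_le_one _)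

theorem centered_A_B_bounded_in_probability_general [IsProbabilityMeasure P]
    (hφ : LipschitzWith K φ)
    (hmeas : ∀ i, Measurable fun ω ↦ (X i ω, Y i ω))
    (hindep : iIndepFun (fun i ω ↦ (X i ω, Y i ω)) P) (hY2 : ∀ i, MemLp (Y i) 2 P)
    (hV : ∀ i, ∫ ω, Y i ω ^ 2 ∂P ≤ V) :
    IsBoundedInProbability P fun n ω ↦
      concomitantSum φ X Y n ω - (P[concomitantSum φ X Y n | sigmaX X n]) ω :=
  isBoundedInProbability_of_integral_sq_le (fun n ↦ by
    have hS : MemLp (concomitantSum φ X Y n) 2 P :=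
      memLp_concomitantSum hφ (fun j _ ↦ measurable_fst.comp (hmeas j)) fun j _ ↦ hY2 j
    exact hS.sub (hS.condExp one_le_two))
    fun n ↦ integral_concomitantSum_sub_condExp_sq_le n hφ hmeas hindep hY2 hV

end IndependentPairs

/-- For iid copies `(X_i, Y_i)` of a pair `(X,Y)` with `E[Y²] < ∞` and continuous
marginal cdf `F` of `X`, both `Aₙ − E(Aₙ | X₁,…,Xₙ)` and `Bₙ − E(Bₙ | X₁,…,Xₙ)`
are bounded in probability. -/
theorem centered_A_B_bounded_in_probability
    {Ω : Type*} [MeasurableSpace Ω] (P : Measure Ω) [IsProbabilityMeasure P]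
    (X Y : ℕ → Ω → ℝ) (μ : Measure (ℝ × ℝ)) [IsProbabilityMeasure μ] (F : ℝ → ℝ)
    (hmeas : ∀ i, Measurable (fun ω => (X i ω, Y i ω)))
    (hindep : iIndepFun (fun i ω => (X i ω, Y i ω)) P)
    (hlaw : ∀ i, Measure.map (fun ω => (X i ω, Y i ω)) P = μ)
    (hF : ∀ x, F x = (μ {p | p.1 ≤ x}).toReal)
    (hFcont : Continuous F)
    (hY2 : Integrable (fun p : ℝ × ℝ => p.2 ^ 2) μ) :
    IsBoundedInProbability P
      (fun n ω => Aseq X Y n ω - (P[Aseq X Y n | sigmaX X n]) ω) ∧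
    IsBoundedInProbability P
      (fun n ω => Bseq X Y n ω - (P[Bseq X Y n | sigmaX X n]) ω) := by
  have hsnd : MemLp Prod.snd 2 μ := (memLp_two_iff_integrable_sq (by fun_prop)).2 hY2
  have hYmem (i : ℕ) : MemLp (Y i) 2 P := hsnd.comp_measurePreserving ⟨hmeas i, hlaw i⟩
  have hYvar (i : ℕ) : ∫ ω, Y i ω ^ 2 ∂P ≤ ∫ p, p.2 ^ 2 ∂μ := by
    rw [← hlaw i, integral_map (hmeas i).aemeasurable (by fun_prop)]
  exact ⟨centered_A_B_bounded_in_probability_general (φ := (max · 0)) (LipschitzWith.id.max_const 0)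
      hmeas hindep hYmem hYvar,
    centered_A_B_bounded_in_probability_general (φ := abs) lipschitzWith_one_norm
      hmeas hindep hYmem hYvar⟩
end
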